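/- There exist gain matrices F*(k) for k=0,…,N−1 (block diagonal with blocks F*_{ii}(k) ∈ ℝ^{q_i×p_i}) and F¹*(k) for k=1,…,N−1 (with zero blocks in positions (1,2),(2,3),(3,1)) such that the admissible control law determined recursively by u(k) = F*(k)(y(k) − C x̂¹(k)) + F¹*(k)(y(k−1) − C x̂(k−1|k−2)) + L(k) x̂(k), where x̂(k) = x̂¹(k) − (B F*(k−1) + K¹(k−1)) (y(k−1) − C x̂(k−1|k−2)) (with the convention that estimates based on an empty measurement record are zero and terms with negative time indices are absent), minimizes the cost J over all admissible control laws; moreover, along this law, x̂(k) = E[x(k) | σ(y(0),…,y(k−2))] almost surely for every k. -/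

import Mathlib

open MeasureTheory ProbabilityTheory Matrix Finset

noncomputable section

/-- Index type for vectors partitioned into three blocks of sizes `v 0, v 1, v 2`. -/
abbrev idx (v : Fin 3 → ℕ) : Type := Σ i : Fin 3, Fin (v i)

/-- The block-index sets `S1 = {1,3}`, `S2 = {1,2}`, `S3 = {2,3}` (0-based:
`{0,2}, {0,1}, {1,2}`). -/
def Sset : Fin 3 → Finset (Fin 3) := ![{0, 2}, {0, 1}, {1, 2}]

/-- Index type for block rows/columns restricted to the blocks in `s`. -/
abbrev ridx (v : Fin 3 → ℕ) (s : Finset (Fin 3)) : Type := {a : idx v // a.1 ∈ s}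

/-- A block-partitioned matrix is block diagonal when all off-diagonal blocks vanish. -/
def BlockDiag {v w : Fin 3 → ℕ} (M : Matrix (idx v) (idx w) ℝ) : Prop :=
  ∀ a b, a.1 ≠ b.1 → M a b = 0

/-- A block-partitioned matrix has zero blocks in positions `(1,2), (2,3), (3,1)`
(1-based), i.e. in positions `(i, i+1 mod 3)` (0-based). -/
def CyclicSparse {v w : Fin 3 → ℕ} (M : Matrix (idx v) (idx w) ℝ) : Prop :=
  ∀ a b, b.1 = a.1 + 1 → M a b = 0

/-- `[M]_{s t}`: the submatrix of the block rows in `s` and block columns in `t`. -/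
def subBB {v w : Fin 3 → ℕ} (M : Matrix (idx v) (idx w) ℝ) (s t : Finset (Fin 3)) :
    Matrix (ridx v s) (ridx w t) ℝ := fun a b => M a.1 b.1

/-- `[M]_{{1,2,3} t}`: all block rows, block columns restricted to `t`. -/
def subCols {v w : Fin 3 → ℕ} (M : Matrix (idx v) (idx w) ℝ) (t : Finset (Fin 3)) :
    Matrix (idx v) (ridx w t) ℝ := fun a b => M a b.1

/-- `[M]ᵢ`: the `i`-th block row of `M`. -/
def blockRow {v w : Fin 3 → ℕ} (M : Matrix (idx v) (idx w) ℝ) (i : Fin 3) :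
    Matrix (Fin (v i)) (idx w) ℝ := fun a b => M ⟨i, a⟩ b

variable {nv qv pv : Fin 3 → ℕ}

/-- The gain `K¹` of the three-player estimator, built from the error covariance `P`: its
`i`-th block row is supported on the block columns in `Sᵢ`, where it equals
`[A]ᵢ [P]_{{1,2,3} Sᵢ} [C]ᵀ_{SᵢSᵢ} ([C]_{SᵢSᵢ}[P]_{SᵢSᵢ}[C]ᵀ_{SᵢSᵢ} + [V]_{SᵢSᵢ})⁻¹`. -/
def K1mat (A : Matrix (idx nv) (idx nv) ℝ) (C : Matrix (idx pv) (idx nv) ℝ)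
    (V : Matrix (idx pv) (idx pv) ℝ) (P : Matrix (idx nv) (idx nv) ℝ) :
    Matrix (idx nv) (idx pv) ℝ := fun a b =>
  if h : b.1 ∈ Sset a.1 then
    (blockRow A a.1 * subCols P (Sset a.1) * (subBB C (Sset a.1) (Sset a.1))ᵀ *
      (subBB C (Sset a.1) (Sset a.1) * subBB P (Sset a.1) (Sset a.1) *
        (subBB C (Sset a.1) (Sset a.1))ᵀ + subBB V (Sset a.1) (Sset a.1))⁻¹) a.2 ⟨b, h⟩
  else 0

/-- The standard Kalman gain `K = A P Cᵀ (C P Cᵀ + V)⁻¹`. -/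
def Kgain (A : Matrix (idx nv) (idx nv) ℝ) (C : Matrix (idx pv) (idx nv) ℝ)
    (V : Matrix (idx pv) (idx pv) ℝ) (P : Matrix (idx nv) (idx nv) ℝ) :
    Matrix (idx nv) (idx pv) ℝ :=
  A * P * Cᵀ * (C * P * Cᵀ + V)⁻¹

/-- The Kalman error covariance recursion `P(0) = P0`,
`P(k+1) = A P(k) Aᵀ + W − K(k) C P(k) Aᵀ`. -/
def Pmat (A : Matrix (idx nv) (idx nv) ℝ) (C : Matrix (idx pv) (idx nv) ℝ)
    (V : Matrix (idx pv) (idx pv) ℝ) (W P0 : Matrix (idx nv) (idx nv) ℝ) :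
    ℕ → Matrix (idx nv) (idx nv) ℝ
  | 0 => P0
  | k + 1 =>
      A * Pmat A C V W P0 k * Aᵀ + W -
        Kgain A C V (Pmat A C V W P0 k) * (C * Pmat A C V W P0 k * Aᵀ)

variable {Ω : Type} [MeasurableSpace Ω]

/-- The one-step Kalman predictor `x̂(k | k−1)`: `x̂(0 | −1) = 0` and
`x̂(k+1 | k) = A x̂(k | k−1) + B u(k) + K(k)(y(k) − C x̂(k | k−1))`. -/
def xpred (A : Matrix (idx nv) (idx nv) ℝ) (B : Matrix (idx nv) (idx qv) ℝ)
    (C : Matrix (idx pv) (idx nv) ℝ) (V : Matrix (idx pv) (idx pv) ℝ)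
    (W P0 : Matrix (idx nv) (idx nv) ℝ)
    (u : ℕ → Ω → idx qv → ℝ) (y : ℕ → Ω → idx pv → ℝ) :
    ℕ → Ω → idx nv → ℝ
  | 0 => fun _ => 0
  | k + 1 => fun ω =>
      A *ᵥ xpred A B C V W P0 u y k ω + B *ᵥ u k ω +
        Kgain A C V (Pmat A C V W P0 k) *ᵥ (y k ω - C *ᵥ xpred A B C V W P0 u y k ω)

/-- The innovation `ỹ(k) = y(k) − C x̂(k | k−1)`. -/
def innov (A : Matrix (idx nv) (idx nv) ℝ) (B : Matrix (idx nv) (idx qv) ℝ)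
    (C : Matrix (idx pv) (idx nv) ℝ) (V : Matrix (idx pv) (idx pv) ℝ)
    (W P0 : Matrix (idx nv) (idx nv) ℝ)
    (u : ℕ → Ω → idx qv → ℝ) (y : ℕ → Ω → idx pv → ℝ) (k : ℕ) : Ω → idx pv → ℝ :=
  fun ω => y k ω - C *ᵥ xpred A B C V W P0 u y k ω

/-- The improved local estimate
`x̂¹(k) = A x̂(k−1 | k−2) + B u(k−1) + K¹(k−1)(y(k−1) − C x̂(k−1 | k−2))` (for `k ≥ 1`). -/
def xh1 (A : Matrix (idx nv) (idx nv) ℝ) (B : Matrix (idx nv) (idx qv) ℝ)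
    (C : Matrix (idx pv) (idx nv) ℝ) (V : Matrix (idx pv) (idx pv) ℝ)
    (W P0 : Matrix (idx nv) (idx nv) ℝ)
    (u : ℕ → Ω → idx qv → ℝ) (y : ℕ → Ω → idx pv → ℝ) (k : ℕ) : Ω → idx nv → ℝ :=
  fun ω =>
    A *ᵥ xpred A B C V W P0 u y (k - 1) ω + B *ᵥ u (k - 1) ω +
      K1mat A C V (Pmat A C V W P0 (k - 1)) *ᵥ innov A B C V W P0 u y (k - 1) ω

/-- A random vector is (jointly) Gaussian when every linear functional of it has a
(possibly degenerate) one-dimensional Gaussian distribution. -/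
def IsGaussianVec {d : Type} [Fintype d] (μ : Measure Ω) (X : Ω → d → ℝ) : Prop :=
  ∀ l : d → ℝ, ∃ m s, μ.map (fun ω => ∑ i, l i * X ω i) = gaussianReal m s

/-- The standing noise assumptions: `x(0), w(0),…,w(N−1), v(0),…,v(N−1)` are measurable,
mutually independent and Gaussian with mean zero and covariances `P0`, `W`, `V`. -/
def NoiseOK (μ : Measure Ω) (N : ℕ) (P0 W : Matrix (idx nv) (idx nv) ℝ)
    (V : Matrix (idx pv) (idx pv) ℝ) (x0 : Ω → idx nv → ℝ)
    (w : ℕ → Ω → idx nv → ℝ) (v : ℕ → Ω → idx pv → ℝ) : Prop :=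
  Measurable x0 ∧ (∀ k, Measurable (w k)) ∧ (∀ k, Measurable (v k)) ∧
  iIndep (fun i : Unit ⊕ Fin N ⊕ Fin N =>
    Sum.elim (fun _ => MeasurableSpace.comap x0 inferInstance)
      (Sum.elim (fun k : Fin N => MeasurableSpace.comap (w ↑k) inferInstance)
        (fun k : Fin N => MeasurableSpace.comap (v ↑k) inferInstance)) i) μ ∧
  IsGaussianVec μ x0 ∧ (∀ k < N, IsGaussianVec μ (w k)) ∧ (∀ k < N, IsGaussianVec μ (v k)) ∧
  (∀ i, ∫ ω, x0 ω i ∂μ = 0) ∧ (∀ i j, ∫ ω, x0 ω i * x0 ω j ∂μ = P0 i j) ∧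
  (∀ k < N, ∀ i, ∫ ω, w k ω i ∂μ = 0) ∧
  (∀ k < N, ∀ i j, ∫ ω, w k ω i * w k ω j ∂μ = W i j) ∧
  (∀ k < N, ∀ i, ∫ ω, v k ω i ∂μ = 0) ∧
  (∀ k < N, ∀ i j, ∫ ω, v k ω i * v k ω j ∂μ = V i j)

/-- The closed-loop equations induced by the admissible control law `(F, G, Φ)`:
`x(k+1) = A x(k) + B u(k) + w(k)`, `y(k) = C x(k) + v(k)`, and
`u(k) = F(k) y(k) + G(k) y(k−1) + ∑_{j ≤ k−2} Φ(k,j) y(j)` (absent terms for `k = 0`). -/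
def ClosedLoop (A : Matrix (idx nv) (idx nv) ℝ) (B : Matrix (idx nv) (idx qv) ℝ)
    (C : Matrix (idx pv) (idx nv) ℝ) (x0 : Ω → idx nv → ℝ)
    (w : ℕ → Ω → idx nv → ℝ) (v : ℕ → Ω → idx pv → ℝ)
    (F G : ℕ → Matrix (idx qv) (idx pv) ℝ) (Φ : ℕ → ℕ → Matrix (idx qv) (idx pv) ℝ)
    (x : ℕ → Ω → idx nv → ℝ) (u : ℕ → Ω → idx qv → ℝ) (y : ℕ → Ω → idx pv → ℝ) : Prop :=
  (∀ ω, x 0 ω = x0 ω) ∧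
  (∀ k, ∀ ω, x (k + 1) ω = A *ᵥ x k ω + B *ᵥ u k ω + w k ω) ∧
  (∀ k, ∀ ω, y k ω = C *ᵥ x k ω + v k ω) ∧
  (∀ k, ∀ ω, u k ω = F k *ᵥ y k ω +
    (if 1 ≤ k then G k *ᵥ y (k - 1) ω else 0) +
    ∑ j ∈ Finset.range (k - 1), Φ k j *ᵥ y j ω)

/-- Sparsity constraints of the three-player information structure: `F(k)` block diagonal
and `G(k)` with zero blocks at `(1,2), (2,3), (3,1)`. -/
def Admissible (F G : ℕ → Matrix (idx qv) (idx pv) ℝ) : Prop :=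
  (∀ k, BlockDiag (F k)) ∧ (∀ k, CyclicSparse (G k))

/-- `σ(y(0), …, y(k−2))`: the common two-step-delayed information. -/
def pastSigma (y : ℕ → Ω → idx pv → ℝ) (k : ℕ) : MeasurableSpace Ω :=
  ⨆ j ∈ Finset.range (k - 1), MeasurableSpace.comap (y j) inferInstance

/-- The finite-horizon quadratic cost
`J = E[∑_{k<N} [x(k);u(k)]ᵀ Q [x(k);u(k)] + x(N)ᵀ Q0 x(N)]`. -/
def cost (μ : Measure Ω) (Qxx : Matrix (idx nv) (idx nv) ℝ)
    (Qxu : Matrix (idx nv) (idx qv) ℝ) (Quu : Matrix (idx qv) (idx qv) ℝ)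
    (Q0 : Matrix (idx nv) (idx nv) ℝ) (N : ℕ)
    (x : ℕ → Ω → idx nv → ℝ) (u : ℕ → Ω → idx qv → ℝ) : ℝ :=
  ∫ ω, ((∑ k ∈ Finset.range N,
      (Sum.elim (x k ω) (u k ω)) ⬝ᵥ
        (Matrix.fromBlocks Qxx Qxu Qxuᵀ Quu) *ᵥ (Sum.elim (x k ω) (u k ω)))
    + (x N ω) ⬝ᵥ Q0 *ᵥ (x N ω)) ∂μ

/-- The closed loop driven by the control law determined recursively by
`u(k) = F*(k)(y(k) − C x̂¹(k)) + F¹*(k)(y(k−1) − C x̂(k−1|k−2)) + L(k) x̂(k)`, where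
`x̂(k) = x̂¹(k) − (B F*(k−1) + K¹(k−1)) (y(k−1) − C x̂(k−1|k−2))`; for `k = 0` the
estimates based on an empty measurement record are zero and the terms with negative time
indices are absent, so `u(0) = F*(0) y(0)`. -/
def OptLoop (A : Matrix (idx nv) (idx nv) ℝ) (B : Matrix (idx nv) (idx qv) ℝ)
    (C : Matrix (idx pv) (idx nv) ℝ) (V : Matrix (idx pv) (idx pv) ℝ)
    (W P0 : Matrix (idx nv) (idx nv) ℝ)
    (x0 : Ω → idx nv → ℝ) (w : ℕ → Ω → idx nv → ℝ) (v : ℕ → Ω → idx pv → ℝ)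
    (Fs F1s : ℕ → Matrix (idx qv) (idx pv) ℝ) (Lm : ℕ → Matrix (idx qv) (idx nv) ℝ)
    (x : ℕ → Ω → idx nv → ℝ) (u : ℕ → Ω → idx qv → ℝ) (y : ℕ → Ω → idx pv → ℝ) : Prop :=
  (∀ ω, x 0 ω = x0 ω) ∧
  (∀ k, ∀ ω, x (k + 1) ω = A *ᵥ x k ω + B *ᵥ u k ω + w k ω) ∧
  (∀ k, ∀ ω, y k ω = C *ᵥ x k ω + v k ω) ∧
  (∀ ω, u 0 ω = Fs 0 *ᵥ y 0 ω) ∧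
  (∀ k, 1 ≤ k → ∀ ω, u k ω =
    Fs k *ᵥ (y k ω - C *ᵥ xh1 A B C V W P0 u y k ω) +
    F1s k *ᵥ innov A B C V W P0 u y (k - 1) ω +
    Lm k *ᵥ (xh1 A B C V W P0 u y k ω -
      (B * Fs (k - 1) + K1mat A C V (Pmat A C V W P0 (k - 1))) *ᵥ
        innov A B C V W P0 u y (k - 1) ω))

/-!
The innovations are white, past innovations are orthogonal to the current prediction error, and
neither depends on the control law. In innovation coordinates an admissible law is an arbitrary
law of the form `u k = F ỹ(k) + Γ ỹ(k-1) + p k`, with `F` block diagonal, `Γ` cyclically sparse and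
`p k` a linear function of the innovations older than `k - 1`; write `r k` for the part of the
predicted state that depends on those older innovations.

Completing squares along the Riccati recursion and applying Pythagoras to the orthogonal
innovations splits the cost into a constant due to the noise, a function of the gains `(F, Γ)`
alone, and `∑ E ‖p k - L k r k‖²` in the norm of the positive definite weight `H k`. The last term
vanishes for `p = L r`. The second is a finite sum of squares of affine functions of the gains, so
it attains its minimum on the subspace of sparse gains, although it need not be strictly convex.
Finally `x k - r k` is orthogonal to the outputs up to time `k - 2`, and being jointly Gaussian
with them it is independent of them, so that `r k` is the conditional expectation.
-/

section SecondMoments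

variable {α ι κ τ : Type*} [MeasurableSpace α] {μ : Measure α}

/-- The matrix `E[X Yᵀ]` of mixed second moments; it is the cross-covariance matrix when `X` and
`Y` are centered. -/
def crossMoment (μ : Measure α) (X : α → ι → ℝ) (Y : α → κ → ℝ) : Matrix ι κ ℝ :=
  Matrix.of fun i j => ∫ ω, X ω i * Y ω j ∂μ

theorem crossMoment_transpose (X : α → ι → ℝ) (Y : α → κ → ℝ) :
    (crossMoment μ X Y)ᵀ = crossMoment μ Y X := by
  ext i j
  simp only [crossMoment, transpose_apply, of_apply, mul_comm]

section

variable [Fintype ι] [Fintype κ]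

theorem memLp_mulVec {X : α → ι → ℝ} (hX : MemLp X 2 μ) (M : Matrix κ ι ℝ) :
    MemLp (fun ω => M *ᵥ X ω) 2 μ :=
  hX.continuousLinearMap_comp M.mulVecLin.toContinuousLinearMap

theorem integrable_eval_mul_eval {X : α → ι → ℝ} {Y : α → κ → ℝ} (hX : MemLp X 2 μ)
    (hY : MemLp Y 2 μ) (i : ι) (j : κ) : Integrable (fun ω => X ω i * Y ω j) μ :=
  (hX.eval i).integrable_mul (hY.eval j)

theorem crossMoment_add_left {X X' : α → ι → ℝ} {Y : α → κ → ℝ} (hX : MemLp X 2 μ)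
    (hX' : MemLp X' 2 μ) (hY : MemLp Y 2 μ) :
    crossMoment μ (X + X') Y = crossMoment μ X Y + crossMoment μ X' Y := by
  ext i j
  simp only [crossMoment, of_apply, Matrix.add_apply, Pi.add_apply, add_mul]
  exact integral_add (integrable_eval_mul_eval hX hY i j) (integrable_eval_mul_eval hX' hY i j)

theorem crossMoment_mulVec_left {X : α → ι → ℝ} {Y : α → κ → ℝ} (hX : MemLp X 2 μ)
    (hY : MemLp Y 2 μ) (M : Matrix τ ι ℝ) :
    crossMoment μ (fun ω => M *ᵥ X ω) Y = M * crossMoment μ X Y := by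
  ext i j
  simp only [crossMoment, of_apply, Matrix.mul_apply, mulVec, dotProduct, Finset.sum_mul, mul_assoc]
  rw [integral_finsetSum _ fun a _ => (integrable_eval_mul_eval hX hY a j).const_mul (M i a)]
  simp only [integral_const_mul]

theorem crossMoment_sub_left {X X' : α → ι → ℝ} {Y : α → κ → ℝ} (hX : MemLp X 2 μ)
    (hX' : MemLp X' 2 μ) (hY : MemLp Y 2 μ) :
    crossMoment μ (X - X') Y = crossMoment μ X Y - crossMoment μ X' Y := by
  ext i j
  simp only [crossMoment, of_apply, Matrix.sub_apply, Pi.sub_apply, sub_mul]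
  exact integral_sub (integrable_eval_mul_eval hX hY i j) (integrable_eval_mul_eval hX' hY i j)

theorem crossMoment_add_right {X : α → ι → ℝ} {Y Y' : α → κ → ℝ} (hX : MemLp X 2 μ)
    (hY : MemLp Y 2 μ) (hY' : MemLp Y' 2 μ) :
    crossMoment μ X (Y + Y') = crossMoment μ X Y + crossMoment μ X Y' := by
  rw [← crossMoment_transpose, crossMoment_add_left hY hY' hX, transpose_add,
    crossMoment_transpose, crossMoment_transpose]

theorem crossMoment_sub_right {X : α → ι → ℝ} {Y Y' : α → κ → ℝ} (hX : MemLp X 2 μ)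
    (hY : MemLp Y 2 μ) (hY' : MemLp Y' 2 μ) :
    crossMoment μ X (Y - Y') = crossMoment μ X Y - crossMoment μ X Y' := by
  rw [← crossMoment_transpose, crossMoment_sub_left hY hY' hX, transpose_sub,
    crossMoment_transpose, crossMoment_transpose]

theorem crossMoment_mulVec_right {X : α → ι → ℝ} {Y : α → κ → ℝ} (hX : MemLp X 2 μ)
    (hY : MemLp Y 2 μ) (M : Matrix τ κ ℝ) :
    crossMoment μ X (fun ω => M *ᵥ Y ω) = crossMoment μ X Y * Mᵀ := by
  rw [← crossMoment_transpose, crossMoment_mulVec_left hY hX, transpose_mul, crossMoment_transpose]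

/-- The mean `E[Xᵀ H X]` of a quadratic form in the random vector `X`. -/
def meanQuadForm (μ : Measure α) (H : Matrix ι ι ℝ) (X : α → ι → ℝ) : ℝ :=
  ∫ ω, X ω ⬝ᵥ H *ᵥ X ω ∂μ

theorem integrable_dotProduct_mulVec {X : α → ι → ℝ} (hX : MemLp X 2 μ) (H : Matrix ι ι ℝ) :
    Integrable (fun ω => X ω ⬝ᵥ H *ᵥ X ω) μ :=
  integrable_finsetSum _ fun i _ =>
    integrable_eval_mul_eval hX (memLp_mulVec hX H) i i

theorem meanQuadForm_eq_trace {X : α → ι → ℝ} (hX : MemLp X 2 μ) (H : Matrix ι ι ℝ) :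
    meanQuadForm μ H X = (H * crossMoment μ X X).trace := by
  rw [← crossMoment_mulVec_left hX hX, ← trace_transpose, crossMoment_transpose]
  exact integral_finsetSum _ fun i _ => integrable_eval_mul_eval hX (memLp_mulVec hX H) i i

theorem meanQuadForm_nonneg {H : Matrix ι ι ℝ} (hH : H.PosSemidef) (X : α → ι → ℝ) :
    0 ≤ meanQuadForm μ H X :=
  integral_nonneg fun ω => hH.dotProduct_mulVec_nonneg (X ω)

@[simp]
theorem meanQuadForm_zero (H : Matrix ι ι ℝ) : meanQuadForm μ H (0 : α → ι → ℝ) = 0 := by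
  simp [meanQuadForm]

theorem posSemidef_crossMoment_self {X : α → ι → ℝ} (hX : MemLp X 2 μ) :
    (crossMoment μ X X).PosSemidef := by
  refine .of_dotProduct_mulVec_nonneg (crossMoment_transpose X X) fun c => ?_
  have hsq : star c ⬝ᵥ crossMoment μ X X *ᵥ c = meanQuadForm μ (vecMulVec c c) X := by
    rw [meanQuadForm_eq_trace hX, vecMulVec_mul, trace_vecMulVec, star_trivial, dotProduct_mulVec,
      dotProduct_comm]
  rw [hsq]
  refine integral_nonneg fun ω => ?_
  simp only [vecMulVec_mulVec, dotProduct_smul, MulOpposite.smul_eq_mul_unop,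
    MulOpposite.unop_op, Pi.zero_apply, dotProduct_comm (X ω) c]
  exact mul_self_nonneg _

end

/-- Square-integrable random vectors, each entry of the first being orthogonal in `L²(μ)` to each
entry of the second. -/
structure L2Orthogonal [Fintype ι] [Fintype κ] (μ : Measure α) (X : α → ι → ℝ) (Y : α → κ → ℝ) :
    Prop where
  memLp_left : MemLp X 2 μ
  memLp_right : MemLp Y 2 μ
  crossMoment_eq_zero : crossMoment μ X Y = 0

namespace L2Orthogonal

variable [Fintype ι] [Fintype κ] {X X' : α → ι → ℝ} {Y : α → κ → ℝ}

theorem symm (h : L2Orthogonal μ X Y) : L2Orthogonal μ Y X :=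
  ⟨h.memLp_right, h.memLp_left, by
    rw [← crossMoment_transpose, h.crossMoment_eq_zero, transpose_zero]⟩

theorem zero_left (hY : MemLp Y 2 μ) : L2Orthogonal μ (0 : α → ι → ℝ) Y :=
  ⟨MemLp.zero, hY, by ext; simp [crossMoment]⟩

theorem add_left (h : L2Orthogonal μ X Y) (h' : L2Orthogonal μ X' Y) :
    L2Orthogonal μ (X + X') Y :=
  ⟨h.memLp_left.add h'.memLp_left, h.memLp_right, by
    rw [crossMoment_add_left h.memLp_left h'.memLp_left h.memLp_right, h.crossMoment_eq_zero,
      h'.crossMoment_eq_zero, add_zero]⟩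

theorem mulVec_left [Fintype τ] (h : L2Orthogonal μ X Y) (M : Matrix τ ι ℝ) :
    L2Orthogonal μ (fun ω => M *ᵥ X ω) Y :=
  ⟨memLp_mulVec h.memLp_left M, h.memLp_right, by
    rw [crossMoment_mulVec_left h.memLp_left h.memLp_right, h.crossMoment_eq_zero,
      Matrix.mul_zero]⟩

theorem sub_left (h : L2Orthogonal μ X Y) (h' : L2Orthogonal μ X' Y) :
    L2Orthogonal μ (X - X') Y :=
  ⟨h.memLp_left.sub h'.memLp_left, h.memLp_right, by
    rw [crossMoment_sub_left h.memLp_left h'.memLp_left h.memLp_right, h.crossMoment_eq_zero,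
      h'.crossMoment_eq_zero, sub_zero]⟩

theorem sub_right (h : L2Orthogonal μ Y X) (h' : L2Orthogonal μ Y X') :
    L2Orthogonal μ Y (X - X') :=
  (h.symm.sub_left h'.symm).symm

theorem mulVec_right [Fintype τ] (h : L2Orthogonal μ Y X) (M : Matrix τ ι ℝ) :
    L2Orthogonal μ Y (fun ω => M *ᵥ X ω) :=
  (h.symm.mulVec_left M).symm

theorem sum_left {σ : Type*} {s : Finset σ} {X : σ → α → ι → ℝ} (hY : MemLp Y 2 μ)
    (h : ∀ j ∈ s, L2Orthogonal μ (X j) Y) : L2Orthogonal μ (∑ j ∈ s, X j) Y :=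
  Finset.sum_induction X (L2Orthogonal μ · Y) (fun _ _ => add_left) (zero_left hY) h

theorem crossMoment_add_self (h : L2Orthogonal μ X X') :
    crossMoment μ (X + X') (X + X') = crossMoment μ X X + crossMoment μ X' X' := by
  have hX := h.memLp_left
  have hX' := h.memLp_right
  rw [crossMoment_add_left hX hX' (hX.add hX'), crossMoment_add_right hX hX hX',
    crossMoment_add_right hX' hX hX', h.crossMoment_eq_zero, h.symm.crossMoment_eq_zero, add_zero,
    zero_add]

theorem meanQuadForm_add (h : L2Orthogonal μ X X') (H : Matrix ι ι ℝ) :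
    meanQuadForm μ H (X + X') = meanQuadForm μ H X + meanQuadForm μ H X' := by
  rw [meanQuadForm_eq_trace (h.memLp_left.add h.memLp_right), meanQuadForm_eq_trace h.memLp_left,
    meanQuadForm_eq_trace h.memLp_right, h.crossMoment_add_self, Matrix.mul_add, trace_add]

end L2Orthogonal

theorem l2Orthogonal_of_indepFun [Fintype ι] [Fintype κ] {X : α → ι → ℝ} {Y : α → κ → ℝ}
    (hX : MemLp X 2 μ) (hY : MemLp Y 2 μ) (hXY : IndepFun X Y μ) (hX₀ : ∀ i, ∫ ω, X ω i ∂μ = 0) :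
    L2Orthogonal μ X Y := by
  refine ⟨hX, hY, ?_⟩
  ext i j
  have hij :=
    (hXY.comp (measurable_pi_apply i) (measurable_pi_apply j)).integral_mul_eq_mul_integral
      (hX.eval i).aestronglyMeasurable (hY.eval j).aestronglyMeasurable
  exact hij.trans (by simp only [Function.comp_def, hX₀, zero_mul, Matrix.zero_apply])

end SecondMoments

section Kalman

section WhiteNoise

variable {α ν ρ : Type*} [Fintype ν] [Fintype ρ] {x0 : α → ν → ℝ} {w : ℕ → α → ν → ℝ}
  {v : ℕ → α → ρ → ℝ} {A : Matrix ν ν ℝ} {C : Matrix ρ ν ℝ} {K : ℕ → Matrix ν ρ ℝ}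

/-- The error `x(k) − x̂(k|k−1)` of the linear one-step predictor with gains `K`. It depends on
the noises only, not on the control inputs. -/
def predError (A : Matrix ν ν ℝ) (C : Matrix ρ ν ℝ) (K : ℕ → Matrix ν ρ ℝ) (x0 : α → ν → ℝ)
    (w : ℕ → α → ν → ℝ) (v : ℕ → α → ρ → ℝ) : ℕ → α → ν → ℝ
  | 0 => x0
  | k + 1 =>
      ((fun ω => A *ᵥ predError A C K x0 w v k ω) + w k) -
        fun ω => K k *ᵥ ((fun ω => C *ᵥ predError A C K x0 w v k ω) + v k) ω

/-- The innovation `y(k) − C x̂(k|k−1)` of the linear one-step predictor with gains `K`, as a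
function of the noises. -/
def innovation (A : Matrix ν ν ℝ) (C : Matrix ρ ν ℝ) (K : ℕ → Matrix ν ρ ℝ) (x0 : α → ν → ℝ)
    (w : ℕ → α → ν → ℝ) (v : ℕ → α → ρ → ℝ) (k : ℕ) : α → ρ → ℝ :=
  (fun ω => C *ᵥ predError A C K x0 w v k ω) + v k

theorem predError_succ (k : ℕ) : predError A C K x0 w v (k + 1) =
    ((fun ω => A *ᵥ predError A C K x0 w v k ω) + w k) -
      fun ω => K k *ᵥ innovation A C K x0 w v k ω :=
  rfl

variable [MeasurableSpace α] {μ : Measure α} {N : ℕ} {P0 W : Matrix ν ν ℝ} {V : Matrix ρ ρ ℝ}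

/-- The second-order content of the noise assumptions: `x0, w 0, …, w (N-1), v 0, …, v (N-1)` are
square integrable, pairwise orthogonal, and have second-moment matrices `P0`, `W`, `V`. -/
structure IsWhiteNoise (μ : Measure α) (N : ℕ) (P0 W : Matrix ν ν ℝ) (V : Matrix ρ ρ ℝ)
    (x0 : α → ν → ℝ) (w : ℕ → α → ν → ℝ) (v : ℕ → α → ρ → ℝ) : Prop where
  memLp_initial : MemLp x0 2 μ
  initial_process : ∀ k < N, L2Orthogonal μ x0 (w k)
  initial_measurement : ∀ k < N, L2Orthogonal μ x0 (v k)
  process_measurement : ∀ j < N, ∀ k < N, L2Orthogonal μ (w j) (v k)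
  process_process : ∀ j < N, ∀ k < N, j ≠ k → L2Orthogonal μ (w j) (w k)
  measurement_measurement : ∀ j < N, ∀ k < N, j ≠ k → L2Orthogonal μ (v j) (v k)
  crossMoment_initial : crossMoment μ x0 x0 = P0
  crossMoment_process : ∀ k < N, crossMoment μ (w k) (w k) = W
  crossMoment_measurement : ∀ k < N, crossMoment μ (v k) (v k) = V

namespace IsWhiteNoise

variable (h : IsWhiteNoise μ N P0 W V x0 w v)

include h

theorem memLp_predError {k : ℕ} (hk : k ≤ N) : MemLp (predError A C K x0 w v k) 2 μ := by
  induction k with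
  | zero => exact h.memLp_initial
  | succ k ih =>
    have hwv := h.process_measurement k hk k hk
    have he := ih (Nat.le_of_succ_le hk)
    exact ((memLp_mulVec he A).add hwv.memLp_left).sub
      (memLp_mulVec ((memLp_mulVec he C).add hwv.memLp_right) (K k))

theorem memLp_innovation {k : ℕ} (hk : k < N) : MemLp (innovation A C K x0 w v k) 2 μ :=
  (memLp_mulVec (h.memLp_predError hk.le) C).add (h.process_measurement k hk k hk).memLp_right

theorem predError_process {j k : ℕ} (hk : k < N) (hjk : j ≤ k) :
    L2Orthogonal μ (predError A C K x0 w v j) (w k) := by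
  induction j with
  | zero => exact h.initial_process k hk
  | succ j ih =>
    have he := ih (Nat.le_of_succ_le hjk)
    exact ((he.mulVec_left A).add_left (h.process_process j (by lia) k hk (by lia))).sub_left
      (((he.mulVec_left C).add_left (h.process_measurement k hk j (by lia)).symm).mulVec_left (K j))

theorem predError_measurement {j k : ℕ} (hk : k < N) (hjk : j ≤ k) :
    L2Orthogonal μ (predError A C K x0 w v j) (v k) := by
  induction j with
  | zero => exact h.initial_measurement k hk
  | succ j ih =>
    have he := ih (Nat.le_of_succ_le hjk)
    exact ((he.mulVec_left A).add_left (h.process_measurement j (by lia) k hk)).sub_left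
      (((he.mulVec_left C).add_left
        (h.measurement_measurement j (by lia) k hk (by lia))).mulVec_left (K j))

theorem innovation_process {j k : ℕ} (hk : k < N) (hjk : j ≤ k) :
    L2Orthogonal μ (innovation A C K x0 w v j) (w k) :=
  ((h.predError_process hk hjk).mulVec_left C).add_left
    (h.process_measurement k hk j (by lia)).symm

theorem innovation_measurement {j k : ℕ} (hk : k < N) (hjk : j < k) :
    L2Orthogonal μ (innovation A C K x0 w v j) (v k) :=
  ((h.predError_measurement hk hjk.le).mulVec_left C).add_left
    (h.measurement_measurement j (hjk.trans hk) k hk hjk.ne)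

theorem crossMoment_predError_innovation {k : ℕ} (hk : k < N) :
    crossMoment μ (predError A C K x0 w v k) (innovation A C K x0 w v k) =
      crossMoment μ (predError A C K x0 w v k) (predError A C K x0 w v k) * Cᵀ := by
  have he := h.memLp_predError (A := A) (C := C) (K := K) hk.le
  have hev := h.predError_measurement (A := A) (C := C) (K := K) hk le_rfl
  rw [innovation, crossMoment_add_right he (memLp_mulVec he C) hev.memLp_right,
    crossMoment_mulVec_right he he, hev.crossMoment_eq_zero, add_zero]

theorem crossMoment_innovation_self {k : ℕ} (hk : k < N) :
    crossMoment μ (innovation A C K x0 w v k) (innovation A C K x0 w v k) =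
      C * crossMoment μ (predError A C K x0 w v k) (predError A C K x0 w v k) * Cᵀ + V := by
  have he := h.memLp_predError (A := A) (C := C) (K := K) hk.le
  have hev := h.predError_measurement (A := A) (C := C) (K := K) hk le_rfl
  rw [innovation, (hev.mulVec_left C).crossMoment_add_self, crossMoment_mulVec_left he
    (memLp_mulVec he C), crossMoment_mulVec_right he he, h.crossMoment_measurement k hk,
    Matrix.mul_assoc]

theorem crossMoment_open_loop_innovation {k : ℕ} (hk : k < N) :
    crossMoment μ ((fun ω => A *ᵥ predError A C K x0 w v k ω) + w k) (innovation A C K x0 w v k) =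
      A * crossMoment μ (predError A C K x0 w v k) (predError A C K x0 w v k) * Cᵀ := by
  have he := h.memLp_predError (A := A) (C := C) (K := K) hk.le
  have htw := h.innovation_process (A := A) (C := C) (K := K) hk le_rfl
  rw [crossMoment_add_left (memLp_mulVec he A) htw.memLp_right htw.memLp_left,
    crossMoment_mulVec_left he htw.memLp_left, htw.symm.crossMoment_eq_zero,
    h.crossMoment_predError_innovation hk, add_zero, Matrix.mul_assoc]

theorem predError_succ_innovation {k : ℕ} (hk : k < N)
    (hK : K k * (C * crossMoment μ (predError A C K x0 w v k) (predError A C K x0 w v k) * Cᵀ + V) =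
      A * crossMoment μ (predError A C K x0 w v k) (predError A C K x0 w v k) * Cᵀ) :
    L2Orthogonal μ (predError A C K x0 w v (k + 1)) (innovation A C K x0 w v k) := by
  have ht := h.memLp_innovation (A := A) (C := C) (K := K) hk
  have ha : MemLp ((fun ω => A *ᵥ predError A C K x0 w v k ω) + w k) 2 μ :=
    (memLp_mulVec (h.memLp_predError hk.le) A).add (h.process_measurement k hk k hk).memLp_left
  refine ⟨h.memLp_predError hk, ht, ?_⟩
  rw [predError_succ, crossMoment_sub_left ha (memLp_mulVec ht (K k)) ht,
    crossMoment_mulVec_left ht ht, h.crossMoment_open_loop_innovation hk,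
    h.crossMoment_innovation_self hk, hK, sub_self]

theorem crossMoment_predError_succ {k : ℕ} (hk : k < N)
    (hK : K k * (C * crossMoment μ (predError A C K x0 w v k) (predError A C K x0 w v k) * Cᵀ + V) =
      A * crossMoment μ (predError A C K x0 w v k) (predError A C K x0 w v k) * Cᵀ) :
    crossMoment μ (predError A C K x0 w v (k + 1)) (predError A C K x0 w v (k + 1)) =
      A * crossMoment μ (predError A C K x0 w v k) (predError A C K x0 w v k) * Aᵀ + W -
        K k * (C * crossMoment μ (predError A C K x0 w v k) (predError A C K x0 w v k) * Aᵀ) := by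
  have he := h.memLp_predError (A := A) (C := C) (K := K) hk.le
  have ht := h.memLp_innovation (A := A) (C := C) (K := K) hk
  have hew := h.predError_process (A := A) (C := C) (K := K) hk le_rfl
  have horth := h.predError_succ_innovation hk hK
  set a := (fun ω => A *ᵥ predError A C K x0 w v k ω) + w k with ha_def
  set P := crossMoment μ (predError A C K x0 w v k) (predError A C K x0 w v k)
  have ha : MemLp a 2 μ := (memLp_mulVec he A).add hew.memLp_right
  have haa : crossMoment μ a a = A * P * Aᵀ + W := by
    rw [ha_def, (hew.mulVec_left A).crossMoment_add_self, crossMoment_mulVec_left he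
      (memLp_mulVec he A), crossMoment_mulVec_right he he, h.crossMoment_process k hk,
      Matrix.mul_assoc]
  have hta : crossMoment μ (innovation A C K x0 w v k) a = C * P * Aᵀ := by
    rw [← crossMoment_transpose, h.crossMoment_open_loop_innovation hk]
    simp only [transpose_mul, transpose_transpose, crossMoment_transpose, Matrix.mul_assoc, P]
  -- Only the part of the new error orthogonal to the innovation contributes.
  have hself : crossMoment μ (predError A C K x0 w v (k + 1)) (predError A C K x0 w v (k + 1)) =
      crossMoment μ (predError A C K x0 w v (k + 1)) a := by
    conv_lhs => enter [3]; rw [predError_succ]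
    rw [crossMoment_sub_right horth.memLp_left ha (memLp_mulVec ht (K k)),
      (horth.mulVec_right (K k)).crossMoment_eq_zero, sub_zero]
  rw [hself, predError_succ, crossMoment_sub_left ha (memLp_mulVec ht (K k)) ha, haa,
    crossMoment_mulVec_left ht ha, hta]

end IsWhiteNoise

end WhiteNoise

theorem isUnit_det_mul_mul_transpose_add {ν ρ : Type*} [Fintype ν] [Fintype ρ] [DecidableEq ρ]
    {P : Matrix ν ν ℝ} {V : Matrix ρ ρ ℝ} (hP : P.PosSemidef) (hV : V.PosDef)
    (C : Matrix ρ ν ℝ) : IsUnit (C * P * Cᵀ + V).det :=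
  (isUnit_iff_isUnit_det _).1 (PosDef.posSemidef_add (hP.mul_mul_conjTranspose_same C) hV).isUnit

theorem Kgain_mul_innovation_covariance {A P : Matrix (idx nv) (idx nv) ℝ}
    {C : Matrix (idx pv) (idx nv) ℝ} {V : Matrix (idx pv) (idx pv) ℝ} (hP : P.PosSemidef)
    (hV : V.PosDef) : Kgain A C V P * (C * P * Cᵀ + V) = A * P * Cᵀ := by
  rw [Kgain, Matrix.mul_assoc, nonsing_inv_mul _ (isUnit_det_mul_mul_transpose_add hP hV C),
    Matrix.mul_one]

/-- The Kalman gains `K(k)` as a sequence. -/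
def kalmanGain (A : Matrix (idx nv) (idx nv) ℝ) (C : Matrix (idx pv) (idx nv) ℝ)
    (V : Matrix (idx pv) (idx pv) ℝ) (W P0 : Matrix (idx nv) (idx nv) ℝ) (k : ℕ) :
    Matrix (idx nv) (idx pv) ℝ :=
  Kgain A C V (Pmat A C V W P0 k)

namespace IsWhiteNoise

variable {μ : Measure Ω} {N : ℕ} {P0 W : Matrix (idx nv) (idx nv) ℝ}
  {V : Matrix (idx pv) (idx pv) ℝ} {x0 : Ω → idx nv → ℝ} {w : ℕ → Ω → idx nv → ℝ}
  {v : ℕ → Ω → idx pv → ℝ} {A : Matrix (idx nv) (idx nv) ℝ} {C : Matrix (idx pv) (idx nv) ℝ}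
  (h : IsWhiteNoise μ N P0 W V x0 w v) (hV : V.PosDef)

include h hV

theorem crossMoment_predError_self {k : ℕ} (hk : k ≤ N) :
    crossMoment μ (predError A C (kalmanGain A C V W P0) x0 w v k)
      (predError A C (kalmanGain A C V W P0) x0 w v k) = Pmat A C V W P0 k := by
  induction k with
  | zero => exact h.crossMoment_initial
  | succ k ih =>
    have hcov := ih (Nat.le_of_succ_le hk)
    have hP : (Pmat A C V W P0 k).PosSemidef :=
      hcov ▸ posSemidef_crossMoment_self (h.memLp_predError (Nat.le_of_succ_le hk))
    rw [h.crossMoment_predError_succ hk (by rw [hcov]; exact Kgain_mul_innovation_covariance hP hV),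
      hcov, Pmat, kalmanGain]

theorem predError_innovation {j k : ℕ} (hk : k ≤ N) (hjk : j < k) :
    L2Orthogonal μ (predError A C (kalmanGain A C V W P0) x0 w v k)
      (innovation A C (kalmanGain A C V W P0) x0 w v j) := by
  induction k with
  | zero => exact absurd hjk j.not_lt_zero
  | succ k ih =>
    obtain rfl | hlt := (Nat.lt_succ_iff.1 hjk).eq_or_lt
    · refine h.predError_succ_innovation hk ?_
      rw [h.crossMoment_predError_self hV (Nat.le_of_succ_le hk)]
      refine Kgain_mul_innovation_covariance ?_ hV
      exact h.crossMoment_predError_self hV (Nat.le_of_succ_le hk) ▸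
        posSemidef_crossMoment_self (h.memLp_predError (Nat.le_of_succ_le hk))
    · have he := ih (Nat.le_of_succ_le hk) hlt
      exact ((he.mulVec_left A).add_left (h.innovation_process hk hlt.le).symm).sub_left
        (((he.mulVec_left C).add_left (h.innovation_measurement hk hlt).symm).mulVec_left _)

theorem innovation_innovation {j k : ℕ} (hk : k < N) (hjk : j < k) :
    L2Orthogonal μ (innovation A C (kalmanGain A C V W P0) x0 w v k)
      (innovation A C (kalmanGain A C V W P0) x0 w v j) :=
  ((h.predError_innovation hV hk.le hjk).mulVec_left C).add_left
    (h.innovation_measurement hk hjk).symm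

end IsWhiteNoise

end Kalman

section LinearImages

variable {α E F G : Type*} [AddCommGroup E] [Module ℝ E] [AddCommGroup F] [Module ℝ F]
  [AddCommGroup G] [Module ℝ G]

/-- The random vectors that are deterministic linear functions of `ξ`. -/
def linearImages (ξ : α → E) : Submodule ℝ (α → F) :=
  (LinearMap.range (LinearMap.ltoFun ℝ E F ℝ)).map (LinearMap.funLeft ℝ F ξ)

theorem mem_linearImages {ξ : α → E} {X : α → F} :
    X ∈ linearImages ξ ↔ ∃ T : E →ₗ[ℝ] F, T ∘ ξ = X := by
  simp only [linearImages, Submodule.mem_map, LinearMap.mem_range, exists_exists_eq_and]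
  rfl

theorem comp_mem_linearImages (ξ : α → E) (T : E →ₗ[ℝ] F) : T ∘ ξ ∈ linearImages ξ :=
  mem_linearImages.2 ⟨T, rfl⟩

theorem linearImages_le_comap_compLeft (ξ : α → E) (f : F →ₗ[ℝ] G) :
    linearImages ξ ≤ (linearImages ξ).comap (f.compLeft α) := by
  intro X hX
  obtain ⟨T, rfl⟩ := mem_linearImages.1 hX
  exact comp_mem_linearImages ξ (f ∘ₗ T)

theorem linearImages_trans {ξ : α → E} {X : α → F} {Y : α → G} (hY : Y ∈ linearImages X)
    (hX : X ∈ linearImages ξ) : Y ∈ linearImages ξ := by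
  obtain ⟨T, rfl⟩ := mem_linearImages.1 hX
  obtain ⟨T', rfl⟩ := mem_linearImages.1 hY
  exact comp_mem_linearImages ξ (T' ∘ₗ T)

/-- The random vectors that are linear functions of `s 0, …, s (m-1)`. -/
def linearPast (s : ℕ → α → E) (m : ℕ) : Submodule ℝ (α → F) :=
  ⨆ j ∈ range m, linearImages (s j)

theorem linearImages_le_linearPast (s : ℕ → α → E) {j m : ℕ} (hj : j < m) :
    (linearImages (s j) : Submodule ℝ (α → F)) ≤ linearPast s m :=
  le_iSup₂_of_le j (mem_range.2 hj) le_rfl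

theorem linearPast_le {s : ℕ → α → E} {m : ℕ} {U : Submodule ℝ (α → F)}
    (h : ∀ j < m, linearImages (s j) ≤ U) : linearPast s m ≤ U :=
  iSup₂_le fun j hj => h j (mem_range.1 hj)

theorem linearPast_mono (s : ℕ → α → E) : Monotone (linearPast s : ℕ → Submodule ℝ (α → F)) :=
  fun _ _ hmn => linearPast_le fun _ hj => linearImages_le_linearPast s (hj.trans_le hmn)

theorem eval_mem_linearPast (s : ℕ → α → E) {j m : ℕ} (hj : j < m) : s j ∈ linearPast s m :=
  linearImages_le_linearPast s hj (comp_mem_linearImages (s j) LinearMap.id)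

theorem linearPast_le_comap_compLeft (s : ℕ → α → E) (m : ℕ) (f : F →ₗ[ℝ] G) :
    linearPast s m ≤ (linearPast s m).comap (f.compLeft α) :=
  linearPast_le fun j hj => (linearImages_le_comap_compLeft (s j) f).trans
    (Submodule.comap_mono (linearImages_le_linearPast s hj))

theorem linearPast_le_linearPast {s : ℕ → α → E} {s' : ℕ → α → F} {m n : ℕ}
    (h : ∀ j < m, s j ∈ linearPast s' n) :
    (linearPast s m : Submodule ℝ (α → G)) ≤ linearPast s' n :=
  linearPast_le fun j hj X hX => by
    obtain ⟨T, rfl⟩ := mem_linearImages.1 hX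
    exact linearPast_le_comap_compLeft s' n T (h j hj)

theorem linearPast_le_linearImages {s : ℕ → α → E} {ξ : α → F} {m : ℕ}
    (h : ∀ j < m, s j ∈ linearImages ξ) :
    (linearPast s m : Submodule ℝ (α → G)) ≤ linearImages ξ :=
  linearPast_le fun j hj _ hX => linearImages_trans hX (h j hj)

variable {ι κ τ : Type*} [Fintype τ]

theorem mulVec_mem_linearImages {ξ : α → E} {X : α → τ → ℝ} (hX : X ∈ linearImages ξ)
    (M : Matrix κ τ ℝ) : (fun ω => M *ᵥ X ω) ∈ linearImages ξ :=
  linearImages_le_comap_compLeft ξ M.mulVecLin hX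

theorem mulVec_mem_linearPast {s : ℕ → α → E} {m : ℕ} {X : α → τ → ℝ} (hX : X ∈ linearPast s m)
    (M : Matrix κ τ ℝ) : (fun ω => M *ᵥ X ω) ∈ linearPast s m :=
  linearPast_le_comap_compLeft s m M.mulVecLin hX

theorem mem_linearPast_iff_exists_sum_mulVec {s : ℕ → α → τ → ℝ} {m : ℕ} {X : α → ι → ℝ} :
    X ∈ linearPast s m ↔
      ∃ Φ : ℕ → Matrix ι τ ℝ, ∑ j ∈ range m, (fun ω => Φ j *ᵥ s j ω) = X := by
  classical
  refine ⟨fun hX => ?_, ?_⟩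
  · obtain ⟨c, rfl⟩ := (Submodule.mem_iSup_finset_iff_exists_sum _ X).1 hX
    choose T hT using fun j => mem_linearImages.1 (c j).2
    refine ⟨fun j => LinearMap.toMatrix' (T j), sum_congr rfl fun j _ => ?_⟩
    rw [← hT j]
    exact funext fun ω => LinearMap.toMatrix'_mulVec (T j) (s j ω)
  · rintro ⟨Φ, rfl⟩
    exact Submodule.sum_mem _ fun j hj =>
      mulVec_mem_linearPast (eval_mem_linearPast s (mem_range.1 hj)) (Φ j)

theorem L2Orthogonal.of_mem_linearPast [MeasurableSpace α] {μ : Measure α} [Fintype ι] [Fintype κ]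
    {s : ℕ → α → τ → ℝ} {m : ℕ} {X : α → ι → ℝ} {Y : α → κ → ℝ} (hX : X ∈ linearPast s m)
    (hY : MemLp Y 2 μ) (h : ∀ j < m, L2Orthogonal μ (s j) Y) : L2Orthogonal μ X Y := by
  obtain ⟨Φ, rfl⟩ := mem_linearPast_iff_exists_sum_mulVec.1 hX
  exact sum_left hY fun j hj => (h j (mem_range.1 hj)).mulVec_left (Φ j)

end LinearImages

section Gaussian

section

variable {α E F : Type*} [NormedAddCommGroup E] [NormedSpace ℝ E] [FiniteDimensional ℝ E]
  [MeasurableSpace E] [BorelSpace E] [NormedAddCommGroup F] [NormedSpace ℝ F] {ξ : α → E}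

theorem integral_eq_zero_of_mem_linearImages [MeasurableSpace α] {μ : Measure α} [CompleteSpace F]
    (hξ : HasGaussianLaw ξ μ) (hξ₀ : ∫ ω, ξ ω ∂μ = 0) {X : α → F} (hX : X ∈ linearImages ξ) :
    ∫ ω, X ω ∂μ = 0 := by
  have := FiniteDimensional.complete ℝ E
  have := FiniteDimensional.proper ℝ E
  obtain ⟨T, rfl⟩ := mem_linearImages.1 hX
  have hT := T.toContinuousLinearMap.integral_comp_comm hξ.integrable
  rwa [hξ₀, map_zero] at hT

variable [MeasurableSpace F] [BorelSpace F]

theorem measurable_of_mem_linearImages {_ : MeasurableSpace α} (hξ : Measurable ξ) {X : α → F}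
    (hX : X ∈ linearImages ξ) : Measurable X := by
  obtain ⟨T, rfl⟩ := mem_linearImages.1 hX
  exact T.continuous_of_finiteDimensional.measurable.comp hξ

variable [MeasurableSpace α] {μ : Measure α}

theorem hasGaussianLaw_of_mem_linearImages (hξ : HasGaussianLaw ξ μ) {X : α → F}
    (hX : X ∈ linearImages ξ) : HasGaussianLaw X μ := by
  obtain ⟨T, rfl⟩ := mem_linearImages.1 hX
  exact hξ.map T.toContinuousLinearMap

variable {ι κ : Type*} [Fintype ι] [Fintype κ]

theorem indepFun_of_l2Orthogonal (hξ : HasGaussianLaw ξ μ) (hξ₀ : ∫ ω, ξ ω ∂μ = 0)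
    {X : α → ι → ℝ} {Y : α → κ → ℝ} (hX : X ∈ linearImages ξ) (hY : Y ∈ linearImages ξ)
    (hXY : L2Orthogonal μ X Y) : IndepFun X Y μ := by
  have := hξ.isProbabilityMeasure
  have hpair : (fun ω => (X ω, Y ω)) ∈ linearImages ξ := by
    obtain ⟨T, rfl⟩ := mem_linearImages.1 hX
    obtain ⟨T', rfl⟩ := mem_linearImages.1 hY
    exact comp_mem_linearImages ξ (T.prod T')
  refine HasGaussianLaw.indepFun_of_covariance_eval (X := fun i ω => X ω i)
    (Y := fun j ω => Y ω j) (hasGaussianLaw_of_mem_linearImages hξ hpair) fun i j => ?_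
  have hX_i : (fun ω => X ω i) ∈ linearImages ξ :=
    linearImages_le_comap_compLeft ξ (LinearMap.proj i : (ι → ℝ) →ₗ[ℝ] ℝ) hX
  have hij : ∫ ω, X ω i * Y ω j ∂μ = 0 := congrFun₂ hXY.crossMoment_eq_zero i j
  rw [covariance_eq_sub (hXY.memLp_left.eval i) (hXY.memLp_right.eval j),
    integral_eq_zero_of_mem_linearImages hξ hξ₀ hX_i, zero_mul, sub_zero]
  exact hij

theorem ae_eq_condExp_comap_add_of_l2Orthogonal (hξ : HasGaussianLaw ξ μ) (hξm : Measurable ξ)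
    (hξ₀ : ∫ ω, ξ ω ∂μ = 0) {Y : α → κ → ℝ} {r d : α → ι → ℝ} (hY : Y ∈ linearImages ξ)
    (hr : r ∈ linearImages Y) (hd : d ∈ linearImages ξ) (hdY : L2Orthogonal μ d Y) :
    r =ᵐ[μ] μ[r + d | MeasurableSpace.comap Y inferInstance] := by
  have := hξ.isProbabilityMeasure
  have hYm : MeasurableSpace.comap Y inferInstance ≤ ‹MeasurableSpace α› :=
    (measurable_of_mem_linearImages hξm hY).comap_le
  have hrm : StronglyMeasurable[MeasurableSpace.comap Y inferInstance] r :=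
    (measurable_of_mem_linearImages (comap_measurable Y) hr).stronglyMeasurable
  have hr_int := (hasGaussianLaw_of_mem_linearImages hξ (linearImages_trans hr hY)).integrable
  have hd_int := (hasGaussianLaw_of_mem_linearImages hξ hd).integrable
  have hd_cond : μ[d | MeasurableSpace.comap Y inferInstance] =ᵐ[μ] fun _ => ∫ ω, d ω ∂μ :=
    condExp_indep_eq (measurable_of_mem_linearImages hξm hd).comap_le hYm
      (comap_measurable d).stronglyMeasurable (indepFun_of_l2Orthogonal hξ hξ₀ hd hY hdY)
  rw [integral_eq_zero_of_mem_linearImages hξ hξ₀ hd] at hd_cond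
  filter_upwards [condExp_add hr_int hd_int (MeasurableSpace.comap Y inferInstance), hd_cond]
    with ω hadd hzero
  rw [hadd, Pi.add_apply, hzero, condExp_of_stronglyMeasurable hYm hrm hr_int, add_zero]

end

/-- The outputs `y 0, …, y (m-1)` collected into one random vector. -/
def stackedPast {α τ : Type*} (y : ℕ → α → τ → ℝ) (m : ℕ) : α → Fin m × τ → ℝ :=
  fun ω a => y a.1 ω a.2

theorem stackedPast_mem_linearImages {α τ E : Type*} [AddCommGroup E] [Module ℝ E]
    {y : ℕ → α → τ → ℝ} {m : ℕ} {ξ : α → E} (hy : ∀ j < m, y j ∈ linearImages ξ) :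
    stackedPast y m ∈ linearImages ξ := by
  choose T hT using fun j : Fin m => mem_linearImages.1 (hy j j.2)
  refine mem_linearImages.2 ⟨LinearMap.pi fun a => LinearMap.proj a.2 ∘ₗ T a.1, ?_⟩
  funext ω a
  exact congrFun₂ (hT a.1) ω a.2

theorem linearPast_le_linearImages_stackedPast {α τ F : Type*} [AddCommGroup F] [Module ℝ F]
    (y : ℕ → α → τ → ℝ) (m : ℕ) :
    (linearPast y m : Submodule ℝ (α → F)) ≤ linearImages (stackedPast y m) :=
  linearPast_le_linearImages fun j hj =>
    comp_mem_linearImages (stackedPast y m) (LinearMap.funLeft ℝ ℝ fun b => (⟨j, hj⟩, b))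

theorem pastSigma_eq_comap_stackedPast {α : Type} (y : ℕ → α → idx pv → ℝ) (k : ℕ) :
    pastSigma y k = MeasurableSpace.comap (stackedPast y (k - 1)) inferInstance := by
  refine le_antisymm (iSup₂_le fun j hj => ?_) ?_
  · have hproj : Measurable fun (z : Fin (k - 1) × idx pv → ℝ) b => z (⟨j, mem_range.1 hj⟩, b) :=
      measurable_pi_lambda _ fun b => measurable_pi_apply _
    exact (hproj.comp (comap_measurable (stackedPast y (k - 1)))).comap_le
  · have hstack : Measurable[pastSigma y k] (stackedPast y (k - 1)) :=
      @measurable_pi_iff _ _ _ (_) _ _ |>.2 fun a => (measurable_pi_apply a.2).comp <|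
        (comap_measurable (y a.1)).mono
          (le_iSup₂_of_le (f := fun j _ => MeasurableSpace.comap (y j) inferInstance) (a.1 : ℕ)
            (mem_range.2 a.1.2) le_rfl) le_rfl
    exact hstack.comap_le

theorem ae_eq_condExp_pastSigma_add_of_l2Orthogonal {E ι : Type*} [NormedAddCommGroup E]
    [NormedSpace ℝ E] [FiniteDimensional ℝ E] [MeasurableSpace E] [BorelSpace E] [Fintype ι]
    {μ : Measure Ω} {ξ : Ω → E} (hξ : HasGaussianLaw ξ μ) (hξm : Measurable ξ)
    (hξ₀ : ∫ ω, ξ ω ∂μ = 0) {y : ℕ → Ω → idx pv → ℝ} {k : ℕ} {r d : Ω → ι → ℝ}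
    (hy : ∀ j < k - 1, y j ∈ linearImages ξ) (hr : r ∈ linearPast y (k - 1))
    (hd : d ∈ linearImages ξ) (hdy : ∀ j < k - 1, L2Orthogonal μ d (y j)) :
    r =ᵐ[μ] μ[r + d | pastSigma y k] := by
  rw [pastSigma_eq_comap_stackedPast]
  have hY := stackedPast_mem_linearImages hy
  refine ae_eq_condExp_comap_add_of_l2Orthogonal hξ hξm hξ₀ hY
    (linearPast_le_linearImages_stackedPast y (k - 1) hr) hd ⟨?_, ?_, ?_⟩
  · exact (hasGaussianLaw_of_mem_linearImages hξ hd).memLp_two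
  · exact (hasGaussianLaw_of_mem_linearImages hξ hY).memLp_two
  · ext i a
    exact congrFun₂ (hdy a.1 a.1.2).crossMoment_eq_zero i a.2

theorem IsGaussianVec.hasGaussianLaw {d : Type} [Fintype d] {μ : Measure Ω}
    {X : Ω → d → ℝ} (hX : IsGaussianVec μ X) (hm : Measurable X) : HasGaussianLaw X μ := by
  classical
  refine ⟨⟨fun L => ?_⟩⟩
  obtain ⟨m, s, hms⟩ := hX fun i => L (Pi.single i 1)
  have hL (z : d → ℝ) : ∑ i, L (Pi.single i 1) * z i = L z := by
    conv_rhs => rw [pi_eq_sum_univ' z, map_sum]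
    exact sum_congr rfl fun i _ => by
      rw [map_smul, smul_eq_mul, mul_comm]
  have hmap : (μ.map X).map L = gaussianReal m s := by
    rw [Measure.map_map L.continuous.measurable hm, ← hms]
    exact congrArg (μ.map ·) (funext fun ω => (hL (X ω)).symm)
  have hmean : ∫ z, L z ∂(μ.map X) = m := by
    rw [← integral_id_gaussianReal (μ := m) (v := s), ← hmap,
      integral_map (f := fun z => z) L.continuous.aemeasurable aestronglyMeasurable_id]
  have hvar : Var[L; μ.map X] = s := by
    rw [← variance_id_gaussianReal (μ := m) (v := s), ← hmap,
      variance_map aemeasurable_id L.continuous.aemeasurable, Function.id_comp]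
  rw [hmap, hmean, hvar, Real.toNNReal_coe]

section

variable {α ν ρ : Type*}

/-- All noise variables up to the horizon, padded to a common dimension. -/
def noiseVector (N : ℕ) (x0 : α → ν → ℝ) (w : ℕ → α → ν → ℝ)
    (v : ℕ → α → ρ → ℝ) (ω : α) (i : Unit ⊕ Fin N ⊕ Fin N) : ν ⊕ ρ → ℝ :=
  match i with
  | .inl _ => Sum.elim (x0 ω) 0
  | .inr (.inl k) => Sum.elim (w k ω) 0
  | .inr (.inr k) => Sum.elim 0 (v k ω)

theorem initial_mem_linearImages_noiseVector (N : ℕ) (x0 : α → ν → ℝ) (w : ℕ → α → ν → ℝ)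
    (v : ℕ → α → ρ → ℝ) : x0 ∈ linearImages (noiseVector N x0 w v) :=
  mem_linearImages.2 ⟨LinearMap.funLeft ℝ ℝ Sum.inl ∘ₗ LinearMap.proj (.inl ()), rfl⟩

theorem process_mem_linearImages_noiseVector {N k : ℕ} (hk : k < N) (x0 : α → ν → ℝ)
    (w : ℕ → α → ν → ℝ) (v : ℕ → α → ρ → ℝ) :
    w k ∈ linearImages (noiseVector N x0 w v) :=
  mem_linearImages.2 ⟨LinearMap.funLeft ℝ ℝ Sum.inl ∘ₗ LinearMap.proj (.inr (.inl ⟨k, hk⟩)), rfl⟩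

theorem measurement_mem_linearImages_noiseVector {N k : ℕ} (hk : k < N) (x0 : α → ν → ℝ)
    (w : ℕ → α → ν → ℝ) (v : ℕ → α → ρ → ℝ) :
    v k ∈ linearImages (noiseVector N x0 w v) :=
  mem_linearImages.2 ⟨LinearMap.funLeft ℝ ℝ Sum.inr ∘ₗ LinearMap.proj (.inr (.inr ⟨k, hk⟩)), rfl⟩

end

namespace NoiseOK

variable {μ : Measure Ω} {N : ℕ} {P0 W : Matrix (idx nv) (idx nv) ℝ}
  {V : Matrix (idx pv) (idx pv) ℝ} {x0 : Ω → idx nv → ℝ} {w : ℕ → Ω → idx nv → ℝ}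
  {v : ℕ → Ω → idx pv → ℝ}

theorem hasGaussianLaw_noiseVector (h : NoiseOK μ N P0 W V x0 w v) :
    HasGaussianLaw (noiseVector N x0 w v) μ := by
  obtain ⟨hx0m, hwm, hvm, hindep, hx0, hw, hv, -⟩ := h
  have hinl (X : Ω → idx nv → ℝ) :
      (fun ω => (Sum.elim (X ω) 0 : idx nv ⊕ idx pv → ℝ)) ∈ linearImages X :=
    mem_linearImages.2 ⟨(fromRows (1 : Matrix (idx nv) (idx nv) ℝ) 0).mulVecLin,
      funext fun ω => by simp [fromRows_mulVec]⟩
  have hinr (X : Ω → idx pv → ℝ) :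
      (fun ω => (Sum.elim 0 (X ω) : idx nv ⊕ idx pv → ℝ)) ∈ linearImages X :=
    mem_linearImages.2 ⟨(fromRows 0 (1 : Matrix (idx pv) (idx pv) ℝ)).mulVecLin,
      funext fun ω => by simp [fromRows_mulVec]⟩
  have hind : iIndepFun (fun i ω => noiseVector N x0 w v ω i) μ := by
    refine iIndep_of_iIndep_of_le hindep ?_
    rintro (_ | k | k)
    · exact (measurable_of_mem_linearImages (comap_measurable x0) (hinl x0)).comap_le
    · exact (measurable_of_mem_linearImages (comap_measurable (w k)) (hinl (w k))).comap_le
    · exact (measurable_of_mem_linearImages (comap_measurable (v k)) (hinr (v k))).comap_le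
  refine hind.hasGaussianLaw ?_
  rintro (_ | k | k)
  · exact hasGaussianLaw_of_mem_linearImages (hx0.hasGaussianLaw hx0m) (hinl x0)
  · exact hasGaussianLaw_of_mem_linearImages ((hw k k.2).hasGaussianLaw (hwm k)) (hinl (w k))
  · exact hasGaussianLaw_of_mem_linearImages ((hv k k.2).hasGaussianLaw (hvm k)) (hinr (v k))

theorem measurable_noiseVector (h : NoiseOK μ N P0 W V x0 w v) :
    Measurable (noiseVector N x0 w v) := by
  obtain ⟨hx0, hw, hv, -⟩ := h
  refine measurable_pi_iff.2 fun i => measurable_pi_iff.2 fun a => ?_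
  obtain _ | k | k := i <;> obtain a | a := a
  · exact (measurable_pi_apply a).comp hx0
  · exact measurable_const
  · exact (measurable_pi_apply a).comp (hw k)
  · exact measurable_const
  · exact measurable_const
  · exact (measurable_pi_apply a).comp (hv k)

theorem integral_noiseVector (h : NoiseOK μ N P0 W V x0 w v) :
    ∫ ω, noiseVector N x0 w v ω ∂μ = 0 := by
  have hint := h.hasGaussianLaw_noiseVector.integrable
  obtain ⟨-, -, -, -, -, -, -, hx0, -, hw, -, hv, -⟩ := h
  funext i a
  rw [eval_integral fun i => hint.eval i, eval_integral fun a => (hint.eval i).eval a]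
  obtain _ | k | k := i <;> obtain a | a := a
  · exact hx0 a
  · exact integral_zero Ω ℝ
  · exact hw k k.2 a
  · exact integral_zero Ω ℝ
  · exact integral_zero Ω ℝ
  · exact hv k k.2 a

theorem isWhiteNoise (h : NoiseOK μ N P0 W V x0 w v) : IsWhiteNoise μ N P0 W V x0 w v := by
  obtain ⟨hx0m, hwm, hvm, hindep, hx0, hw, hv, hx0₀, hP0, hw₀, hW, hv₀, hV⟩ := h
  have hx0L := (hx0.hasGaussianLaw hx0m).memLp_two
  have hwL (k) (hk : k < N) := ((hw k hk).hasGaussianLaw (hwm k)).memLp_two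
  have hvL (k) (hk : k < N) := ((hv k hk).hasGaussianLaw (hvm k)).memLp_two
  have hne {i j : Unit ⊕ Fin N ⊕ Fin N} (hij : i ≠ j) := hindep.indep hij
  exact
    { memLp_initial := hx0L
      initial_process := fun k hk => l2Orthogonal_of_indepFun hx0L (hwL k hk)
        (hne (i := .inl ()) (j := .inr (.inl ⟨k, hk⟩)) (by simp)) hx0₀
      initial_measurement := fun k hk => l2Orthogonal_of_indepFun hx0L (hvL k hk)
        (hne (i := .inl ()) (j := .inr (.inr ⟨k, hk⟩)) (by simp)) hx0₀
      process_measurement := fun j hj k hk => l2Orthogonal_of_indepFun (hwL j hj) (hvL k hk)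
        (hne (i := .inr (.inl ⟨j, hj⟩)) (j := .inr (.inr ⟨k, hk⟩)) (by simp)) (hw₀ j hj)
      process_process := fun j hj k hk hjk => l2Orthogonal_of_indepFun (hwL j hj) (hwL k hk)
        (hne (i := .inr (.inl ⟨j, hj⟩)) (j := .inr (.inl ⟨k, hk⟩)) (by simpa using hjk)) (hw₀ j hj)
      measurement_measurement := fun j hj k hk hjk =>
        l2Orthogonal_of_indepFun (hvL j hj) (hvL k hk)
          (hne (i := .inr (.inr ⟨j, hj⟩)) (j := .inr (.inr ⟨k, hk⟩)) (by simpa using hjk))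
          (hv₀ j hj)
      crossMoment_initial := Matrix.ext hP0
      crossMoment_process := fun k hk => Matrix.ext (hW k hk)
      crossMoment_measurement := fun k hk => Matrix.ext (hV k hk) }

end NoiseOK

end Gaussian

section LinearQuadratic

variable {ν κ : Type*}

theorem transpose_eq_of_posSemidef {S : Matrix ν ν ℝ} (hS : S.PosSemidef) : Sᵀ = S :=
  hS.isHermitian

theorem mulVec_dotProduct_eq [Fintype ν] [Fintype κ] (M : Matrix κ ν ℝ) (x : ν → ℝ) (y : κ → ℝ) :
    M *ᵥ x ⬝ᵥ y = x ⬝ᵥ Mᵀ *ᵥ y := by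
  rw [dotProduct_comm, dotProduct_mulVec, dotProduct_comm, mulVec_transpose]

variable [Fintype ν]

/-- The weight `H = Quu + Bᵀ S' B` of the input in the completed square. -/
def inputWeight (B : Matrix ν κ ℝ) (Quu : Matrix κ κ ℝ) (S' : Matrix ν ν ℝ) : Matrix κ κ ℝ :=
  Quu + Bᵀ * S' * B

theorem posDef_inputWeight [Finite κ] {S' : Matrix ν ν ℝ} (hS : S'.PosSemidef)
    (B : Matrix ν κ ℝ) {Quu : Matrix κ κ ℝ} (hQuu : Quu.PosDef) :
    (inputWeight B Quu S').PosDef :=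
  hQuu.add_posSemidef (hS.conjTranspose_mul_mul_same B)

variable [Fintype κ] [DecidableEq κ]

/-- The gain `L = −H⁻¹ (Bᵀ S' A + Qxuᵀ)` of the optimal state feedback when the cost-to-go has
weight `S'`. -/
def lqGain (A : Matrix ν ν ℝ) (B Qxu : Matrix ν κ ℝ) (Quu : Matrix κ κ ℝ) (S' : Matrix ν ν ℝ) :
    Matrix κ ν ℝ :=
  -((inputWeight B Quu S')⁻¹ * (Bᵀ * S' * A + Qxuᵀ))

/-- One backward step of the Riccati recursion. -/
def riccatiStep (A : Matrix ν ν ℝ) (B : Matrix ν κ ℝ) (Qxx : Matrix ν ν ℝ) (Qxu : Matrix ν κ ℝ)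
    (Quu : Matrix κ κ ℝ) (S' : Matrix ν ν ℝ) : Matrix ν ν ℝ :=
  Aᵀ * S' * A + Qxx - (Aᵀ * S' * B + Qxu) * (inputWeight B Quu S')⁻¹ * (Bᵀ * S' * A + Qxuᵀ)

variable {A S' : Matrix ν ν ℝ} {B : Matrix ν κ ℝ} {Qxx : Matrix ν ν ℝ} {Qxu : Matrix ν κ ℝ}
  {Quu : Matrix κ κ ℝ}

theorem inputWeight_mul_lqGain (hS : S'.PosSemidef) (A : Matrix ν ν ℝ) (B Qxu : Matrix ν κ ℝ)
    (hQuu : Quu.PosDef) :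
    inputWeight B Quu S' * lqGain A B Qxu Quu S' = -(Bᵀ * S' * A + Qxuᵀ) := by
  have hdet : IsUnit (inputWeight B Quu S').det :=
    (isUnit_iff_isUnit_det _).1 (posDef_inputWeight hS B hQuu).isUnit
  rw [lqGain, Matrix.mul_neg, mul_nonsing_inv_cancel_left _ _ hdet]

theorem riccatiStep_eq (hS : S'.PosSemidef) (A : Matrix ν ν ℝ) (B : Matrix ν κ ℝ)
    (Qxx : Matrix ν ν ℝ) (Qxu : Matrix ν κ ℝ) (hQuu : Quu.PosDef) :
    riccatiStep A B Qxx Qxu Quu S' = Aᵀ * S' * A + Qxx -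
      (lqGain A B Qxu Quu S')ᵀ * inputWeight B Quu S' * lqGain A B Qxu Quu S' := by
  have hL := inputWeight_mul_lqGain hS A B Qxu hQuu
  have hLT : (lqGain A B Qxu Quu S')ᵀ * inputWeight B Quu S' = -(Aᵀ * S' * B + Qxu) := by
    rw [← transpose_eq_of_posSemidef (posDef_inputWeight hS B hQuu).posSemidef, ← transpose_mul, hL]
    simp only [transpose_neg, transpose_add, transpose_mul, transpose_transpose,
      transpose_eq_of_posSemidef hS, Matrix.mul_assoc]
  rw [hLT, lqGain, riccatiStep, Matrix.neg_mul, Matrix.mul_neg, neg_neg,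
    Matrix.mul_assoc _ _ (_ + _)]

theorem completion_of_squares (hS : S'.PosSemidef) (A : Matrix ν ν ℝ) (B : Matrix ν κ ℝ)
    (Qxx : Matrix ν ν ℝ) (Qxu : Matrix ν κ ℝ) (hQuu : Quu.PosDef) (x : ν → ℝ) (u : κ → ℝ) :
    Sum.elim x u ⬝ᵥ fromBlocks Qxx Qxu Qxuᵀ Quu *ᵥ Sum.elim x u +
        (A *ᵥ x + B *ᵥ u) ⬝ᵥ S' *ᵥ (A *ᵥ x + B *ᵥ u) =
      x ⬝ᵥ riccatiStep A B Qxx Qxu Quu S' *ᵥ x +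
        (u - lqGain A B Qxu Quu S' *ᵥ x) ⬝ᵥ
          inputWeight B Quu S' *ᵥ (u - lqGain A B Qxu Quu S' *ᵥ x) := by
  rw [riccatiStep_eq hS A B Qxx Qxu hQuu]
  have hHL := inputWeight_mul_lqGain hS A B Qxu hQuu
  have hHT := transpose_eq_of_posSemidef (posDef_inputWeight hS B hQuu).posSemidef
  set L := lqGain A B Qxu Quu S'
  have hQxu : x ⬝ᵥ Qxu *ᵥ u = u ⬝ᵥ Qxuᵀ *ᵥ x := by
    rw [dotProduct_comm, mulVec_dotProduct_eq]
  have hABS : x ⬝ᵥ (Aᵀ * (S' * B)) *ᵥ u = u ⬝ᵥ (Bᵀ * (S' * A)) *ᵥ x := by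
    rw [dotProduct_comm, mulVec_dotProduct_eq]
    simp only [transpose_mul, transpose_transpose, transpose_eq_of_posSemidef hS, Matrix.mul_assoc]
  have hHu : u ⬝ᵥ inputWeight B Quu S' *ᵥ u = u ⬝ᵥ Quu *ᵥ u + u ⬝ᵥ (Bᵀ * S' * B) *ᵥ u := by
    rw [inputWeight, add_mulVec, dotProduct_add]
  have hcross : L *ᵥ x ⬝ᵥ inputWeight B Quu S' *ᵥ u = u ⬝ᵥ (inputWeight B Quu S' * L) *ᵥ x := by
    rw [dotProduct_comm, mulVec_dotProduct_eq, hHT, mulVec_mulVec]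
  have hsquare : (u - L *ᵥ x) ⬝ᵥ inputWeight B Quu S' *ᵥ (u - L *ᵥ x) =
      u ⬝ᵥ inputWeight B Quu S' *ᵥ u - 2 * u ⬝ᵥ (inputWeight B Quu S' * L) *ᵥ x +
        x ⬝ᵥ (Lᵀ * inputWeight B Quu S' * L) *ᵥ x := by
    simp only [mulVec_sub, sub_dotProduct, dotProduct_sub, hcross, mulVec_mulVec,
      mulVec_dotProduct_eq L, Matrix.mul_assoc]
    ring
  rw [hsquare, hHL, hHu, fromBlocks_mulVec, sumElim_dotProduct_sumElim]
  simp only [Sum.elim_comp_inl, Sum.elim_comp_inr, mulVec_add, add_mulVec, sub_mulVec, neg_mulVec,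
    add_dotProduct, dotProduct_add, dotProduct_sub, dotProduct_neg, mulVec_dotProduct_eq,
    mulVec_mulVec, Matrix.mul_assoc, hQxu, hABS]
  ring

theorem posSemidef_riccatiStep (hQ : (fromBlocks Qxx Qxu Qxuᵀ Quu).PosSemidef) (hQuu : Quu.PosDef)
    (hS : S'.PosSemidef) : (riccatiStep A B Qxx Qxu Quu S').PosSemidef := by
  refine .of_dotProduct_mulVec_nonneg ?_ fun x => ?_
  · have hQxx : Qxxᵀ = Qxx := transpose_eq_of_posSemidef (hQ.submatrix Sum.inl)
    have hH := transpose_eq_of_posSemidef (posDef_inputWeight hS B hQuu).posSemidef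
    rw [riccatiStep_eq hS A B Qxx Qxu hQuu, IsHermitian, conjTranspose_eq_transpose_of_trivial]
    simp only [transpose_sub, transpose_add, transpose_mul, transpose_transpose,
      transpose_eq_of_posSemidef hS, hQxx, hH, Matrix.mul_assoc]
  · have hsq := completion_of_squares hS A B Qxx Qxu hQuu x (lqGain A B Qxu Quu S' *ᵥ x)
    rw [sub_self, zero_dotProduct, add_zero] at hsq
    rw [star_trivial, ← hsq]
    exact add_nonneg (hQ.dotProduct_mulVec_nonneg _) (hS.dotProduct_mulVec_nonneg _)

/-- `S 0, …, S N` is a solution of the backward Riccati recursion of a linear-quadratic problem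
with positive semidefinite stage and terminal weights and positive definite input weight. -/
structure IsRiccatiSolution (N : ℕ) (A : Matrix ν ν ℝ) (B : Matrix ν κ ℝ) (Qxx : Matrix ν ν ℝ)
    (Qxu : Matrix ν κ ℝ) (Quu : Matrix κ κ ℝ) (S : ℕ → Matrix ν ν ℝ) : Prop where
  posSemidef_stage : (fromBlocks Qxx Qxu Qxuᵀ Quu).PosSemidef
  posDef_input : Quu.PosDef
  posSemidef_terminal : (S N).PosSemidef
  recursion : ∀ k < N, S k = riccatiStep A B Qxx Qxu Quu (S (k + 1))

namespace IsRiccatiSolution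

variable {N : ℕ} {S : ℕ → Matrix ν ν ℝ}

theorem posSemidef (h : IsRiccatiSolution N A B Qxx Qxu Quu S) {k : ℕ} (hk : k ≤ N) :
    (S k).PosSemidef := by
  induction hk using Nat.decreasingInduction with
  | self => exact h.posSemidef_terminal
  | of_succ k hk ih =>
    rw [h.recursion k hk]
    exact posSemidef_riccatiStep h.posSemidef_stage h.posDef_input ih

theorem posSemidef_inputWeight (h : IsRiccatiSolution N A B Qxx Qxu Quu S) {k : ℕ} (hk : k < N) :
    (inputWeight B Quu (S (k + 1))).PosSemidef :=
  (posDef_inputWeight (h.posSemidef hk) B h.posDef_input).posSemidef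

variable {α : Type*} [MeasurableSpace α] {μ : Measure α} {x w : ℕ → α → ν → ℝ} {u : ℕ → α → κ → ℝ}

theorem meanQuadForm_stage_add (h : IsRiccatiSolution N A B Qxx Qxu Quu S) {k : ℕ} (hk : k < N)
    (hx : ∀ ω, x (k + 1) ω = A *ᵥ x k ω + B *ᵥ u k ω + w k ω) (hxL : MemLp (x k) 2 μ)
    (huL : MemLp (u k) 2 μ) (hw : L2Orthogonal μ (fun ω => A *ᵥ x k ω + B *ᵥ u k ω) (w k)) :
    meanQuadForm μ (fromBlocks Qxx Qxu Qxuᵀ Quu) (fun ω => Sum.elim (x k ω) (u k ω)) +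
        meanQuadForm μ (S (k + 1)) (x (k + 1)) =
      meanQuadForm μ (S k) (x k) +
        (meanQuadForm μ (inputWeight B Quu (S (k + 1)))
            (fun ω => u k ω - lqGain A B Qxu Quu (S (k + 1)) *ᵥ x k ω) +
          meanQuadForm μ (S (k + 1)) (w k)) := by
  have hxu : MemLp (fun ω => Sum.elim (x k ω) (u k ω)) 2 μ :=
    memLp_pi_iff.2 (Sum.rec hxL.eval huL.eval)
  have huLx : MemLp (fun ω => u k ω - lqGain A B Qxu Quu (S (k + 1)) *ᵥ x k ω) 2 μ :=
    huL.sub (memLp_mulVec hxL _)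
  rw [show x (k + 1) = (fun ω => A *ᵥ x k ω + B *ᵥ u k ω) + w k from funext hx,
    hw.meanQuadForm_add, ← add_assoc, ← add_assoc]
  simp only [meanQuadForm]
  rw [← integral_add (integrable_dotProduct_mulVec hxu _)
      (integrable_dotProduct_mulVec hw.memLp_left _),
    ← integral_add (integrable_dotProduct_mulVec hxL _) (integrable_dotProduct_mulVec huLx _)]
  congr 2
  funext ω
  rw [h.recursion k hk]
  exact completion_of_squares (h.posSemidef hk) A B Qxx Qxu h.posDef_input (x k ω) (u k ω)

theorem sum_meanQuadForm_add_terminal (h : IsRiccatiSolution N A B Qxx Qxu Quu S)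
    (hx : ∀ k ω, x (k + 1) ω = A *ᵥ x k ω + B *ᵥ u k ω + w k ω) (hxL : ∀ k < N, MemLp (x k) 2 μ)
    (huL : ∀ k < N, MemLp (u k) 2 μ)
    (hw : ∀ k < N, L2Orthogonal μ (fun ω => A *ᵥ x k ω + B *ᵥ u k ω) (w k)) :
    ∑ k ∈ range N,
          meanQuadForm μ (fromBlocks Qxx Qxu Qxuᵀ Quu) (fun ω => Sum.elim (x k ω) (u k ω)) +
        meanQuadForm μ (S N) (x N) =
      meanQuadForm μ (S 0) (x 0) + ∑ k ∈ range N,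
        (meanQuadForm μ (inputWeight B Quu (S (k + 1)))
            (fun ω => u k ω - lqGain A B Qxu Quu (S (k + 1)) *ᵥ x k ω) +
          meanQuadForm μ (S (k + 1)) (w k)) := by
  have htelescope := sum_range_sub (fun k => meanQuadForm μ (S k) (x k)) N
  have hstage := sum_congr rfl fun k hk => have hk := mem_range.1 hk
    h.meanQuadForm_stage_add hk (hx k) (hxL k hk) (huL k hk) (hw k hk)
  rw [sum_add_distrib, sum_add_distrib] at hstage
  rw [sum_sub_distrib] at htelescope
  linarith

end IsRiccatiSolution

theorem cost_eq_sum_meanQuadForm {μ : Measure Ω} (Qxx : Matrix (idx nv) (idx nv) ℝ)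
    (Qxu : Matrix (idx nv) (idx qv) ℝ) (Quu : Matrix (idx qv) (idx qv) ℝ)
    (Q0 : Matrix (idx nv) (idx nv) ℝ) {N : ℕ} {x : ℕ → Ω → idx nv → ℝ} {u : ℕ → Ω → idx qv → ℝ}
    (hx : ∀ k ≤ N, MemLp (x k) 2 μ) (hu : ∀ k < N, MemLp (u k) 2 μ) :
    cost μ Qxx Qxu Quu Q0 N x u =
      ∑ k ∈ range N,
          meanQuadForm μ (fromBlocks Qxx Qxu Qxuᵀ Quu) (fun ω => Sum.elim (x k ω) (u k ω)) +
        meanQuadForm μ Q0 (x N) := by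
  have hstage (k) (hk : k ∈ range N) := have hk := mem_range.1 hk
    integrable_dotProduct_mulVec (X := fun ω => Sum.elim (x k ω) (u k ω))
      (memLp_pi_iff.2 (Sum.rec (hx k hk.le).eval (hu k hk).eval)) (fromBlocks Qxx Qxu Qxuᵀ Quu)
  rw [cost, integral_add (integrable_finsetSum _ hstage)
    (integrable_dotProduct_mulVec (hx N le_rfl) Q0), integral_finsetSum _ hstage]
  rfl

end LinearQuadratic

section InnovationCoordinates

variable {α : Type*}

/-- The process `s` shifted by one step, with value `0` at time `0`. -/
def delay {E : Type*} [Zero E] (s : ℕ → α → E) : ℕ → α → E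
  | 0 => 0
  | k + 1 => s k

theorem delay_mem_linearPast {E F : Type*} [AddCommGroup E] [Module ℝ E] [AddCommGroup F]
    [Module ℝ F] {s : ℕ → α → E} {z : ℕ → α → F} {k : ℕ}
    (hz : ∀ j < k, z j ∈ linearPast s j) : delay z k ∈ linearPast s (k - 1) := by
  cases k with
  | zero => exact zero_mem _
  | succ k => exact hz k k.lt_succ_self

theorem delay_self_mem_linearPast {E : Type*} [AddCommGroup E] [Module ℝ E] (s : ℕ → α → E)
    (k : ℕ) : delay s k ∈ linearPast s k := by
  cases k with
  | zero => exact zero_mem _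
  | succ k => exact eval_mem_linearPast s k.lt_succ_self

variable {ν κ ρ : Type*}

theorem mulVec_delay_add_mem_linearPast [Fintype ρ] {t : ℕ → α → ρ → ℝ} {z r : ℕ → α → ν → ℝ}
    {k : ℕ} (M : Matrix ν ρ ℝ) (hz : ∀ ω, z k ω = M *ᵥ delay t k ω + r k ω)
    (hr : r k ∈ linearPast t (k - 1)) :
    z k ∈ linearPast t k := by
  rw [show z k = (fun ω => M *ᵥ delay t k ω) + r k from funext hz]
  exact add_mem (mulVec_mem_linearPast (delay_self_mem_linearPast t k) _)
    (linearPast_mono t (k.sub_le 1) hr)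

variable [Fintype ν] {C : Matrix ρ ν ℝ} {y t : ℕ → α → ρ → ℝ} {z : ℕ → α → ν → ℝ}

theorem delay_output_eq (hy : ∀ k ω, y k ω = t k ω + C *ᵥ z k ω) (k : ℕ) (ω : α) :
    delay y k ω = delay t k ω + C *ᵥ delay z k ω := by
  cases k with
  | zero => simp [delay]
  | succ k => exact hy k ω

theorem output_mem_linearPast (hy : ∀ k ω, y k ω = t k ω + C *ᵥ z k ω) {k : ℕ}
    (hz : z k ∈ linearPast t k) : y k ∈ linearPast t (k + 1) := by
  rw [show y k = t k + fun ω => C *ᵥ z k ω from funext (hy k)]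
  exact add_mem (eval_mem_linearPast t k.lt_succ_self)
    (mulVec_mem_linearPast (linearPast_mono t k.le_succ hz) C)

variable [Fintype κ] [Fintype ρ]

/-- The innovations representation of a controlled system: the output `y` is generated by the
predictor state `z`, which is driven by the input `u` and the innovations `t`. -/
structure InnovationsModel (A : Matrix ν ν ℝ) (B : Matrix ν κ ℝ) (C : Matrix ρ ν ℝ)
    (K : ℕ → Matrix ν ρ ℝ) (u : ℕ → α → κ → ℝ) (y t : ℕ → α → ρ → ℝ) (z : ℕ → α → ν → ℝ) :
    Prop where
  state_zero : z 0 = 0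
  state_succ : ∀ k ω, z (k + 1) ω = A *ᵥ z k ω + B *ᵥ u k ω + K k *ᵥ t k ω
  output : ∀ k ω, y k ω = t k ω + C *ᵥ z k ω

/-- The part of the predictor state which does not depend on the last innovation, when the input
depends on the current innovation through the gain `F`. -/
def delayedEstimate (A : Matrix ν ν ℝ) (B : Matrix ν κ ℝ) (F : ℕ → Matrix κ ρ ℝ)
    (u : ℕ → α → κ → ℝ) (t : ℕ → α → ρ → ℝ) (z : ℕ → α → ν → ℝ) : ℕ → α → ν → ℝ
  | 0 => 0
  | k + 1 => fun ω => A *ᵥ z k ω + B *ᵥ (u k ω - F k *ᵥ t k ω)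

/-- A control law in innovation coordinates: input and predictor state are split into their
dependence on the current innovation, on the previous one, and on the older ones. -/
structure InnovationsForm (B : Matrix ν κ ℝ) (C : Matrix ρ ν ℝ) (K : ℕ → Matrix ν ρ ℝ)
    (F Γ : ℕ → Matrix κ ρ ℝ) (u : ℕ → α → κ → ℝ) (y t : ℕ → α → ρ → ℝ) (z r : ℕ → α → ν → ℝ)
    (p : ℕ → α → κ → ℝ) : Prop where
  output : ∀ k ω, y k ω = t k ω + C *ᵥ z k ω
  state : ∀ k ω, z k ω = (B * F (k - 1) + K (k - 1)) *ᵥ delay t k ω + r k ω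
  input : ∀ k ω, u k ω = F k *ᵥ t k ω + Γ k *ᵥ delay t k ω + p k ω
  estimate_mem : ∀ k, r k ∈ linearPast t (k - 1)
  offset_mem : ∀ k, p k ∈ linearPast t (k - 1)

variable {A : Matrix ν ν ℝ} {B : Matrix ν κ ℝ} {K : ℕ → Matrix ν ρ ℝ} {F Γ G : ℕ → Matrix κ ρ ℝ}
  {u p : ℕ → α → κ → ℝ} {r : ℕ → α → ν → ℝ}

namespace InnovationsModel

theorem state_eq (h : InnovationsModel A B C K u y t z) (F : ℕ → Matrix κ ρ ℝ) (k : ℕ) (ω : α) :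
    z k ω = (B * F (k - 1) + K (k - 1)) *ᵥ delay t k ω + delayedEstimate A B F u t z k ω := by
  cases k with
  | zero => simp [h.state_zero, delay, delayedEstimate]
  | succ k =>
    simp only [h.state_succ, delay, delayedEstimate, add_tsub_cancel_right, add_mulVec, mulVec_sub,
      mulVec_mulVec]
    abel

theorem innovationsForm (h : InnovationsModel A B C K u y t z)
    (hu : ∀ k ω, u k ω = F k *ᵥ t k ω + Γ k *ᵥ delay t k ω + p k ω)
    (hp : ∀ k, (∀ j ≤ k, delayedEstimate A B F u t z j ∈ linearPast t (j - 1)) →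
      p k ∈ linearPast t (k - 1)) :
    InnovationsForm B C K F Γ u y t z (delayedEstimate A B F u t z) p := by
  have hr (k) : delayedEstimate A B F u t z k ∈ linearPast t (k - 1) := by
    induction k using Nat.strong_induction_on with
    | _ k ih =>
      cases k with
      | zero => exact zero_mem _
      | succ k =>
        have hpk : p k ∈ linearPast t k :=
          linearPast_mono t (k.sub_le 1) (hp k fun j hj => ih j (Nat.lt_succ_of_le hj))
        have hzk : z k ∈ linearPast t k :=
          mulVec_delay_add_mem_linearPast _ (h.state_eq F k) (ih k k.lt_succ_self)
        have hrk : delayedEstimate A B F u t z (k + 1) =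
            (fun ω => A *ᵥ z k ω) + fun ω => B *ᵥ ((fun ω => Γ k *ᵥ delay t k ω) + p k) ω :=
          funext fun ω => by
            simp only [delayedEstimate, hu, Pi.add_apply, add_assoc, add_sub_cancel_left]
        rw [hrk]
        exact add_mem (mulVec_mem_linearPast hzk A) (mulVec_mem_linearPast (add_mem
          (mulVec_mem_linearPast (delay_self_mem_linearPast t k) _) hpk) B)
  exact ⟨h.output, h.state_eq F, hu, hr, fun k => hp k fun j _ => hr j⟩

theorem innovationsForm_of_outputFeedback (h : InnovationsModel A B C K u y t z)
    {Φ : ℕ → ℕ → Matrix κ ρ ℝ} (hu : ∀ k ω, u k ω =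
      F k *ᵥ y k ω + G k *ᵥ delay y k ω + ∑ j ∈ range (k - 1), Φ k j *ᵥ y j ω) :
    InnovationsForm B C K F (fun k => G k + F k * C * (B * F (k - 1) + K (k - 1))) u y t z
      (delayedEstimate A B F u t z) fun k =>
        (fun ω => (F k * C) *ᵥ delayedEstimate A B F u t z k ω) +
          (fun ω => (G k * C) *ᵥ delay z k ω) + ∑ j ∈ range (k - 1), fun ω => Φ k j *ᵥ y j ω := by
  refine h.innovationsForm (fun k ω => ?_) fun k hr => ?_
  · rw [hu, h.output, h.state_eq F, delay_output_eq h.output]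
    simp only [Pi.add_apply, Finset.sum_apply, mulVec_add, add_mulVec, mulVec_mulVec,
      Matrix.mul_add, Matrix.mul_assoc]
    abel
  · have hz (j) (hj : j ≤ k) : z j ∈ linearPast t j :=
      mulVec_delay_add_mem_linearPast _ (h.state_eq F j) (hr j hj)
    refine add_mem (add_mem (mulVec_mem_linearPast (hr k le_rfl) _) (mulVec_mem_linearPast
      (delay_mem_linearPast fun j hj => hz j hj.le) _)) (sum_mem fun j hj => ?_)
    have hj : j < k - 1 := mem_range.1 hj
    exact linearPast_mono t hj (mulVec_mem_linearPast
      (output_mem_linearPast h.output (hz j (hj.le.trans (k.sub_le 1)))) _)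

end InnovationsModel

namespace InnovationsForm

theorem state_mem (h : InnovationsForm B C K F Γ u y t z r p) (k : ℕ) : z k ∈ linearPast t k :=
  mulVec_delay_add_mem_linearPast _ (h.state k) (h.estimate_mem k)

theorem input_mem (h : InnovationsForm B C K F Γ u y t z r p) (k : ℕ) :
    u k ∈ linearPast t (k + 1) := by
  rw [show u k = (fun ω => F k *ᵥ t k ω) + (fun ω => Γ k *ᵥ delay t k ω) + p k from
    funext (h.input k)]
  exact add_mem (add_mem (mulVec_mem_linearPast (eval_mem_linearPast t k.lt_succ_self) _)
    (mulVec_mem_linearPast (linearPast_mono t k.le_succ (delay_self_mem_linearPast t k)) _))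
    (linearPast_mono t ((k.sub_le 1).trans k.le_succ) (h.offset_mem k))

theorem linearPast_output {E : Type*} [AddCommGroup E] [Module ℝ E]
    (h : InnovationsForm B C K F Γ u y t z r p) (m : ℕ) :
    (linearPast y m : Submodule ℝ (α → E)) = linearPast t m := by
  refine le_antisymm (linearPast_le_linearPast fun j hj => linearPast_mono t hj
    (output_mem_linearPast h.output (h.state_mem j))) (linearPast_le_linearPast fun j => ?_)
  induction j using Nat.strong_induction_on with
  | _ j ih =>
    intro hj
    have hz : z j ∈ linearPast y m :=
      linearPast_le_linearPast (fun i hi => ih i hi (hi.trans hj)) (h.state_mem j)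
    rw [show t j = y j - fun ω => C *ᵥ z j ω from
      funext fun ω => (sub_eq_of_eq_add (h.output j ω)).symm]
    exact sub_mem (eval_mem_linearPast y hj) (mulVec_mem_linearPast hz C)

theorem exists_outputFeedback (h : InnovationsForm B C K F Γ u y t z r p) :
    ∃ Φ : ℕ → ℕ → Matrix κ ρ ℝ, ∀ k ω, u k ω = F k *ᵥ y k ω +
      (Γ k - F k * C * (B * F (k - 1) + K (k - 1))) *ᵥ delay y k ω +
        ∑ j ∈ range (k - 1), Φ k j *ᵥ y j ω := by
  set G : ℕ → Matrix κ ρ ℝ := fun k => Γ k - F k * C * (B * F (k - 1) + K (k - 1)) with hG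
  have hrest (k) : p k - (fun ω => (F k * C) *ᵥ r k ω) - (fun ω => (G k * C) *ᵥ delay z k ω) ∈
      linearPast y (k - 1) := by
    rw [h.linearPast_output]
    exact sub_mem (sub_mem (h.offset_mem k) (mulVec_mem_linearPast (h.estimate_mem k) _))
      (mulVec_mem_linearPast (delay_mem_linearPast fun j _ => h.state_mem j) _)
  choose Φ hΦ using fun k => mem_linearPast_iff_exists_sum_mulVec.1 (hrest k)
  refine ⟨Φ, fun k ω => ?_⟩
  have hΦω := congrFun (hΦ k) ω
  simp only [Finset.sum_apply, Pi.sub_apply] at hΦω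
  rw [hΦω, h.input, h.output, h.state, delay_output_eq h.output]
  simp only [hG, mulVec_add, sub_mulVec, Matrix.sub_mul, add_mulVec, mulVec_mulVec,
    Matrix.mul_add, Matrix.mul_assoc]
  abel

end InnovationsForm

end InnovationCoordinates

section ThreePlayerLoops

/-- The trajectories of the controlled plant with initial state `x0`, process noise `w` and
measurement noise `v`, under an arbitrary input `u`. -/
structure IsPlantTrajectory {α ν κ ρ : Type*} [Fintype ν] [Fintype κ] (A : Matrix ν ν ℝ)
    (B : Matrix ν κ ℝ) (C : Matrix ρ ν ℝ) (x0 : α → ν → ℝ) (w : ℕ → α → ν → ℝ) (v : ℕ → α → ρ → ℝ)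
    (x : ℕ → α → ν → ℝ) (u : ℕ → α → κ → ℝ) (y : ℕ → α → ρ → ℝ) : Prop where
  initial : ∀ ω, x 0 ω = x0 ω
  state : ∀ k ω, x (k + 1) ω = A *ᵥ x k ω + B *ᵥ u k ω + w k ω
  output : ∀ k ω, y k ω = C *ᵥ x k ω + v k ω

variable {α : Type} {A : Matrix (idx nv) (idx nv) ℝ} {B : Matrix (idx nv) (idx qv) ℝ}
  {C : Matrix (idx pv) (idx nv) ℝ} {V : Matrix (idx pv) (idx pv) ℝ}
  {W P0 : Matrix (idx nv) (idx nv) ℝ} {x0 : α → idx nv → ℝ} {w : ℕ → α → idx nv → ℝ}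
  {v : ℕ → α → idx pv → ℝ} {x : ℕ → α → idx nv → ℝ} {u : ℕ → α → idx qv → ℝ}
  {y : ℕ → α → idx pv → ℝ}

theorem innovationsModel_xpred (A : Matrix (idx nv) (idx nv) ℝ) (B : Matrix (idx nv) (idx qv) ℝ)
    (C : Matrix (idx pv) (idx nv) ℝ) (V : Matrix (idx pv) (idx pv) ℝ)
    (W P0 : Matrix (idx nv) (idx nv) ℝ) (u : ℕ → α → idx qv → ℝ) (y : ℕ → α → idx pv → ℝ) :
    InnovationsModel A B C (kalmanGain A C V W P0) u y (innov A B C V W P0 u y)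
      (xpred A B C V W P0 u y) :=
  ⟨rfl, fun _ _ => rfl, fun _ _ => (sub_add_cancel _ _).symm⟩

theorem IsPlantTrajectory.state_eq (h : IsPlantTrajectory A B C x0 w v x u y)
    (V : Matrix (idx pv) (idx pv) ℝ) (W P0 : Matrix (idx nv) (idx nv) ℝ) (k : ℕ) (ω : α) :
    x k ω = xpred A B C V W P0 u y k ω + predError A C (kalmanGain A C V W P0) x0 w v k ω := by
  induction k with
  | zero => rw [h.initial, xpred, predError, zero_add]
  | succ k ih =>
    simp only [h.state, h.output, ih, xpred, predError, kalmanGain, Pi.add_apply, Pi.sub_apply,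
      mulVec_add, mulVec_sub]
    abel

theorem IsPlantTrajectory.innov_eq (h : IsPlantTrajectory A B C x0 w v x u y)
    (V : Matrix (idx pv) (idx pv) ℝ) (W P0 : Matrix (idx nv) (idx nv) ℝ) :
    innov A B C V W P0 u y = innovation A C (kalmanGain A C V W P0) x0 w v := by
  funext k ω
  rw [innov, h.output, h.state_eq V W P0, mulVec_add, innovation, Pi.add_apply]
  abel

theorem ClosedLoop.isPlantTrajectory {F G : ℕ → Matrix (idx qv) (idx pv) ℝ}
    {Φ : ℕ → ℕ → Matrix (idx qv) (idx pv) ℝ} (h : ClosedLoop A B C x0 w v F G Φ x u y) :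
    IsPlantTrajectory A B C x0 w v x u y :=
  ⟨h.1, h.2.1, h.2.2.1⟩

theorem ite_mulVec_pred_eq_mulVec_delay {κ ρ : Type*} [Fintype ρ] (G : Matrix κ ρ ℝ)
    (y : ℕ → α → ρ → ℝ) (k : ℕ) (ω : α) :
    (if 1 ≤ k then G *ᵥ y (k - 1) ω else 0) = G *ᵥ delay y k ω := by
  cases k <;> simp [delay]

theorem ClosedLoop.exists_innovationsForm {F G : ℕ → Matrix (idx qv) (idx pv) ℝ}
    {Φ : ℕ → ℕ → Matrix (idx qv) (idx pv) ℝ} (h : ClosedLoop A B C x0 w v F G Φ x u y)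
    (V : Matrix (idx pv) (idx pv) ℝ) (W P0 : Matrix (idx nv) (idx nv) ℝ) :
    ∃ r p, InnovationsForm B C (kalmanGain A C V W P0) F
      (fun k => G k + F k * C * (B * F (k - 1) + kalmanGain A C V W P0 (k - 1))) u y
      (innov A B C V W P0 u y) (xpred A B C V W P0 u y) r p :=
  ⟨_, _, (innovationsModel_xpred A B C V W P0 u y).innovationsForm_of_outputFeedback
    fun k ω => (h.2.2.2 k ω).trans (by rw [ite_mulVec_pred_eq_mulVec_delay])⟩

theorem xh1_succ_sub (A : Matrix (idx nv) (idx nv) ℝ) (B : Matrix (idx nv) (idx qv) ℝ)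
    (C : Matrix (idx pv) (idx nv) ℝ) (V : Matrix (idx pv) (idx pv) ℝ)
    (W P0 : Matrix (idx nv) (idx nv) ℝ) (F : ℕ → Matrix (idx qv) (idx pv) ℝ)
    (u : ℕ → α → idx qv → ℝ) (y : ℕ → α → idx pv → ℝ) (k : ℕ) (ω : α) :
    xh1 A B C V W P0 u y (k + 1) ω -
        (B * F k + K1mat A C V (Pmat A C V W P0 k)) *ᵥ innov A B C V W P0 u y k ω =
      delayedEstimate A B F u (innov A B C V W P0 u y) (xpred A B C V W P0 u y) (k + 1) ω := by
  simp only [xh1, delayedEstimate, add_tsub_cancel_right, add_mulVec, mulVec_sub, mulVec_mulVec]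
  abel

namespace OptLoop

variable {Fs F1s : ℕ → Matrix (idx qv) (idx pv) ℝ} {Lm : ℕ → Matrix (idx qv) (idx nv) ℝ}

theorem isPlantTrajectory (h : OptLoop A B C V W P0 x0 w v Fs F1s Lm x u y) :
    IsPlantTrajectory A B C x0 w v x u y :=
  ⟨h.1, h.2.1, h.2.2.1⟩

theorem input_eq (h : OptLoop A B C V W P0 x0 w v Fs F1s Lm x u y) (k : ℕ) (ω : α) :
    u k ω = Fs k *ᵥ innov A B C V W P0 u y k ω +
      (F1s k + Fs k * C * (kalmanGain A C V W P0 (k - 1) -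
        K1mat A C V (Pmat A C V W P0 (k - 1)))) *ᵥ delay (innov A B C V W P0 u y) k ω +
      Lm k *ᵥ delayedEstimate A B Fs u (innov A B C V W P0 u y) (xpred A B C V W P0 u y) k ω := by
  obtain ⟨-, -, -, hu0, hu⟩ := h
  have hmodel := innovationsModel_xpred A B C V W P0 u y
  cases k with
  | zero => simp [hu0, hmodel.output, hmodel.state_zero, delay, delayedEstimate]
  | succ k =>
    have hxh1 := sub_eq_iff_eq_add.1 (xh1_succ_sub A B C V W P0 Fs u y k ω)
    rw [hu (k + 1) k.succ_pos ω, hmodel.output (k + 1) ω, hmodel.state_eq Fs (k + 1) ω]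
    simp only [hxh1, add_tsub_cancel_right, delay, mulVec_add, mulVec_sub,
      add_mulVec, sub_mulVec, mulVec_mulVec, Matrix.mul_sub, Matrix.mul_assoc]
    abel

theorem innovationsForm (h : OptLoop A B C V W P0 x0 w v Fs F1s Lm x u y) :
    InnovationsForm B C (kalmanGain A C V W P0) Fs
      (fun k => F1s k + Fs k * C * (kalmanGain A C V W P0 (k - 1) -
        K1mat A C V (Pmat A C V W P0 (k - 1)))) u y (innov A B C V W P0 u y)
      (xpred A B C V W P0 u y)
      (delayedEstimate A B Fs u (innov A B C V W P0 u y) (xpred A B C V W P0 u y))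
      fun k ω => Lm k *ᵥ
        delayedEstimate A B Fs u (innov A B C V W P0 u y) (xpred A B C V W P0 u y) k ω :=
  (innovationsModel_xpred A B C V W P0 u y).innovationsForm h.input_eq fun k hr =>
    mulVec_mem_linearPast (hr k le_rfl) (Lm k)

theorem exists_closedLoop (h : OptLoop A B C V W P0 x0 w v Fs F1s Lm x u y) :
    ∃ Φ, ClosedLoop A B C x0 w v Fs (fun k => F1s k -
      Fs k * C * (B * Fs (k - 1) + K1mat A C V (Pmat A C V W P0 (k - 1)))) Φ x u y := by
  obtain ⟨Φ, hΦ⟩ := h.innovationsForm.exists_outputFeedback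
  refine ⟨Φ, h.1, h.2.1, h.2.2.1, fun k ω => ?_⟩
  rw [hΦ, ite_mulVec_pred_eq_mulVec_delay]
  congr 3
  simp only [Matrix.mul_add, Matrix.mul_sub]
  abel

end OptLoop

end ThreePlayerLoops

section CostSplitting

section

variable {α ν κ ρ : Type*} [Fintype ν] [Fintype κ] [Fintype ρ] [MeasurableSpace α] {μ : Measure α}

theorem memLp_of_mem_linearPast {s : ℕ → α → ρ → ℝ} {m : ℕ} {X : α → ν → ℝ}
    (hX : X ∈ linearPast s m) (hs : ∀ j < m, MemLp (s j) 2 μ) : MemLp X 2 μ :=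
  (L2Orthogonal.of_mem_linearPast (Y := (0 : α → ν → ℝ)) hX MemLp.zero fun j hj =>
    (L2Orthogonal.zero_left (hs j hj)).symm).memLp_left

/-- The innovations `t` and prediction errors `e` of an optimal predictor up to the horizon `N`:
both are orthogonal to the earlier innovations. -/
structure OrthogonalInnovations (μ : Measure α) (N : ℕ) (t : ℕ → α → ρ → ℝ)
    (e : ℕ → α → ν → ℝ) : Prop where
  memLp_error_zero : MemLp (e 0) 2 μ
  memLp_innovation : ∀ k < N, MemLp (t k) 2 μ
  innovation_innovation : ∀ k < N, ∀ j < k, L2Orthogonal μ (t j) (t k)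
  innovation_error : ∀ k ≤ N, ∀ j < k, L2Orthogonal μ (t j) (e k)

namespace OrthogonalInnovations

variable {N k : ℕ} {t : ℕ → α → ρ → ℝ} {e : ℕ → α → ν → ℝ} {X : α → κ → ℝ}

theorem memLp_error (h : OrthogonalInnovations μ N t e) (hk : k ≤ N) : MemLp (e k) 2 μ := by
  cases k with
  | zero => exact h.memLp_error_zero
  | succ k => exact (h.innovation_error (k + 1) hk k k.lt_succ_self).memLp_right

theorem of_mem_linearPast_innovation (h : OrthogonalInnovations μ N t e) (hk : k < N)
    (hX : X ∈ linearPast t k) : L2Orthogonal μ X (t k) :=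
  .of_mem_linearPast hX (h.memLp_innovation k hk) (h.innovation_innovation k hk)

theorem of_mem_linearPast_error (h : OrthogonalInnovations μ N t e) (hk : k ≤ N)
    (hX : X ∈ linearPast t k) : L2Orthogonal μ X (e k) :=
  .of_mem_linearPast hX (h.memLp_error hk) (h.innovation_error k hk)

theorem of_mem_linearPast_delay (h : OrthogonalInnovations μ N t e) (hk : k ≤ N)
    (hX : X ∈ linearPast t (k - 1)) : L2Orthogonal μ X (delay t k) := by
  cases k with
  | zero =>
    have hXL := memLp_of_mem_linearPast (μ := μ) hX fun j hj => absurd hj j.not_lt_zero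
    exact (L2Orthogonal.zero_left hXL).symm
  | succ k => exact h.of_mem_linearPast_innovation hk hX

theorem memLp_of_mem_linearPast (h : OrthogonalInnovations μ N t e) (hk : k ≤ N)
    (hX : X ∈ linearPast t k) : MemLp X 2 μ :=
  _root_.memLp_of_mem_linearPast hX fun j hj => h.memLp_innovation j (hj.trans_le hk)

theorem memLp_delay (h : OrthogonalInnovations μ N t e) (hk : k ≤ N) : MemLp (delay t k) 2 μ :=
  h.memLp_of_mem_linearPast hk (delay_self_mem_linearPast t k)

end OrthogonalInnovations

/-- The contribution of the gains `F` and `Γ` on the current and on the previous innovation to the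
mean of the Riccati square `(u(k) − L(k)x(k))ᵀ H(k) (u(k) − L(k)x(k))`. -/
def gainCost (μ : Measure α) (B : Matrix ν κ ℝ) (K : ℕ → Matrix ν ρ ℝ) (H : ℕ → Matrix κ κ ℝ)
    (L : ℕ → Matrix κ ν ℝ) (t : ℕ → α → ρ → ℝ) (e : ℕ → α → ν → ℝ) (F Γ : ℕ → Matrix κ ρ ℝ)
    (k : ℕ) : ℝ :=
  meanQuadForm μ (H k) (fun ω => F k *ᵥ t k ω - L k *ᵥ e k ω) +
    meanQuadForm μ (H k)
      fun ω => (Γ k - L k * (B * F (k - 1) + K (k - 1))) *ᵥ delay t k ω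

variable {B : Matrix ν κ ℝ} {C : Matrix ρ ν ℝ} {K : ℕ → Matrix ν ρ ℝ} {F Γ : ℕ → Matrix κ ρ ℝ}
  {u p : ℕ → α → κ → ℝ} {y t : ℕ → α → ρ → ℝ} {x z r e : ℕ → α → ν → ℝ} {N k : ℕ}

theorem InnovationsForm.meanQuadForm_deviation (h : InnovationsForm B C K F Γ u y t z r p)
    (ho : OrthogonalInnovations μ N t e) (hk : k < N) (hx : ∀ ω, x k ω = z k ω + e k ω)
    (H : ℕ → Matrix κ κ ℝ) (L : ℕ → Matrix κ ν ℝ) :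
    meanQuadForm μ (H k) (fun ω => u k ω - L k *ᵥ x k ω) =
      gainCost μ B K H L t e F Γ k +
        meanQuadForm μ (H k) (fun ω => p k ω - L k *ᵥ r k ω) := by
  set a : α → κ → ℝ := fun ω => F k *ᵥ t k ω - L k *ᵥ e k ω with ha
  set b : α → κ → ℝ :=
    fun ω => (Γ k - L k * (B * F (k - 1) + K (k - 1))) *ᵥ delay t k ω with hb
  set c : α → κ → ℝ := fun ω => p k ω - L k *ᵥ r k ω with hc
  have hc_mem : c ∈ linearPast t (k - 1) :=
    sub_mem (h.offset_mem k) (mulVec_mem_linearPast (h.estimate_mem k) (L k))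
  have hbc_mem : b + c ∈ linearPast t k :=
    add_mem (mulVec_mem_linearPast (delay_self_mem_linearPast t k) _)
      (linearPast_mono t (k.sub_le 1) hc_mem)
  have hbc : L2Orthogonal μ b c :=
    ((ho.of_mem_linearPast_delay hk.le hc_mem).mulVec_right _).symm
  have habc : L2Orthogonal μ a (b + c) :=
    (((ho.of_mem_linearPast_innovation hk hbc_mem).mulVec_right (F k)).sub_right
      ((ho.of_mem_linearPast_error hk.le hbc_mem).mulVec_right (L k))).symm
  have hsplit : (fun ω => u k ω - L k *ᵥ x k ω) = a + (b + c) := by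
    funext ω
    simp only [ha, hb, hc, hx, h.input, h.state, Pi.add_apply, mulVec_add, sub_mulVec,
      ← mulVec_mulVec]
    abel
  rw [hsplit, habc.meanQuadForm_add, hbc.meanQuadForm_add, ← add_assoc, gainCost]

end

section ThreePlayer

variable {μ : Measure Ω} {N : ℕ} {A : Matrix (idx nv) (idx nv) ℝ} {B : Matrix (idx nv) (idx qv) ℝ}
  {C : Matrix (idx pv) (idx nv) ℝ} {V : Matrix (idx pv) (idx pv) ℝ}
  {W P0 : Matrix (idx nv) (idx nv) ℝ} {x0 : Ω → idx nv → ℝ} {w : ℕ → Ω → idx nv → ℝ}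
  {v : ℕ → Ω → idx pv → ℝ}

theorem IsWhiteNoise.orthogonalInnovations (h : IsWhiteNoise μ N P0 W V x0 w v) (hV : V.PosDef)
    (A : Matrix (idx nv) (idx nv) ℝ) (C : Matrix (idx pv) (idx nv) ℝ) :
    OrthogonalInnovations μ N (innovation A C (kalmanGain A C V W P0) x0 w v)
      (predError A C (kalmanGain A C V W P0) x0 w v) where
  memLp_error_zero := h.memLp_initial
  memLp_innovation _ hk := h.memLp_innovation hk
  innovation_innovation _ hk _ hj := (h.innovation_innovation hV hk hj).symm
  innovation_error _ hk _ hj := (h.predError_innovation hV hk hj).symm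

variable {Qxx : Matrix (idx nv) (idx nv) ℝ} {Qxu : Matrix (idx nv) (idx qv) ℝ}
  {Quu : Matrix (idx qv) (idx qv) ℝ} {S : ℕ → Matrix (idx nv) (idx nv) ℝ}
  {F Γ F' Γ' : ℕ → Matrix (idx qv) (idx pv) ℝ} {x r x' r' : ℕ → Ω → idx nv → ℝ}
  {u p u' p' : ℕ → Ω → idx qv → ℝ} {y y' : ℕ → Ω → idx pv → ℝ}

/-- The part of the cost which depends only on the gains `F` and `Γ` on the current and on the
previous innovation of the Kalman predictor. -/
def totalGainCost (μ : Measure Ω) (N : ℕ) (A : Matrix (idx nv) (idx nv) ℝ)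
    (B : Matrix (idx nv) (idx qv) ℝ) (C : Matrix (idx pv) (idx nv) ℝ)
    (V : Matrix (idx pv) (idx pv) ℝ) (W P0 : Matrix (idx nv) (idx nv) ℝ)
    (Qxu : Matrix (idx nv) (idx qv) ℝ) (Quu : Matrix (idx qv) (idx qv) ℝ)
    (S : ℕ → Matrix (idx nv) (idx nv) ℝ) (x0 : Ω → idx nv → ℝ) (w : ℕ → Ω → idx nv → ℝ)
    (v : ℕ → Ω → idx pv → ℝ) (F Γ : ℕ → Matrix (idx qv) (idx pv) ℝ) : ℝ :=
  ∑ k ∈ range N, gainCost μ B (kalmanGain A C V W P0) (fun k => inputWeight B Quu (S (k + 1)))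
    (fun k => lqGain A B Qxu Quu (S (k + 1))) (innovation A C (kalmanGain A C V W P0) x0 w v)
    (predError A C (kalmanGain A C V W P0) x0 w v) F Γ k

theorem cost_eq_totalGainCost_add (h : IsWhiteNoise μ N P0 W V x0 w v) (hV : V.PosDef)
    (hS : IsRiccatiSolution N A B Qxx Qxu Quu S) (hxuy : IsPlantTrajectory A B C x0 w v x u y)
    (hform : InnovationsForm B C (kalmanGain A C V W P0) F Γ u y (innov A B C V W P0 u y)
      (xpred A B C V W P0 u y) r p) :
    cost μ Qxx Qxu Quu (S N) N x u =
      meanQuadForm μ (S 0) x0 + ∑ k ∈ range N, meanQuadForm μ (S (k + 1)) (w k) +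
        totalGainCost μ N A B C V W P0 Qxu Quu S x0 w v F Γ +
        ∑ k ∈ range N, meanQuadForm μ (inputWeight B Quu (S (k + 1)))
          (fun ω => p k ω - lqGain A B Qxu Quu (S (k + 1)) *ᵥ r k ω) := by
  have ho := h.orthogonalInnovations hV A C
  have hx_eq (k) :
      x k = xpred A B C V W P0 u y k + predError A C (kalmanGain A C V W P0) x0 w v k :=
    funext (hxuy.state_eq V W P0 k)
  rw [hxuy.innov_eq V W P0] at hform
  have hxL (k) (hk : k ≤ N) : MemLp (x k) 2 μ :=
    hx_eq k ▸ (ho.memLp_of_mem_linearPast hk (hform.state_mem k)).add (ho.memLp_error hk)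
  have huL (k) (hk : k < N) : MemLp (u k) 2 μ := ho.memLp_of_mem_linearPast hk (hform.input_mem k)
  have hpast {ι : Type} [Fintype ι] {X : Ω → ι → ℝ} {k : ℕ} (hk : k < N)
      (hX : X ∈ linearPast (innovation A C (kalmanGain A C V W P0) x0 w v) (k + 1)) :
      L2Orthogonal μ X (w k) :=
    .of_mem_linearPast hX (h.initial_process k hk).memLp_right fun j hj =>
      h.innovation_process hk (Nat.lt_succ_iff.1 hj)
  have hw (k) (hk : k < N) : L2Orthogonal μ (fun ω => A *ᵥ x k ω + B *ᵥ u k ω) (w k) :=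
    ((hx_eq k ▸ (hpast hk (linearPast_mono _ k.le_succ (hform.state_mem k))).add_left
      (h.predError_process hk le_rfl)).mulVec_left A).add_left
        ((hpast hk (hform.input_mem k)).mulVec_left B)
  rw [cost_eq_sum_meanQuadForm Qxx Qxu Quu (S N) hxL huL,
    hS.sum_meanQuadForm_add_terminal hxuy.state (fun k hk => hxL k hk.le) huL hw,
    show x 0 = x0 from funext hxuy.initial, sum_add_distrib,
    sum_congr rfl fun k hk => hform.meanQuadForm_deviation ho (mem_range.1 hk)
      (hxuy.state_eq V W P0 k) (fun k => inputWeight B Quu (S (k + 1)))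
      fun k => lqGain A B Qxu Quu (S (k + 1)), sum_add_distrib, totalGainCost]
  ring

theorem cost_le_cost_of_totalGainCost_le (h : IsWhiteNoise μ N P0 W V x0 w v) (hV : V.PosDef)
    (hS : IsRiccatiSolution N A B Qxx Qxu Quu S) (hxuy : IsPlantTrajectory A B C x0 w v x u y)
    (hform : InnovationsForm B C (kalmanGain A C V W P0) F Γ u y (innov A B C V W P0 u y)
      (xpred A B C V W P0 u y) r fun k ω => lqGain A B Qxu Quu (S (k + 1)) *ᵥ r k ω)
    (hxuy' : IsPlantTrajectory A B C x0 w v x' u' y')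
    (hform' : InnovationsForm B C (kalmanGain A C V W P0) F' Γ' u' y' (innov A B C V W P0 u' y')
      (xpred A B C V W P0 u' y') r' p')
    (hle : totalGainCost μ N A B C V W P0 Qxu Quu S x0 w v F Γ ≤
      totalGainCost μ N A B C V W P0 Qxu Quu S x0 w v F' Γ') :
    cost μ Qxx Qxu Quu (S N) N x u ≤ cost μ Qxx Qxu Quu (S N) N x' u' := by
  have hrest : 0 ≤ ∑ k ∈ range N, meanQuadForm μ (inputWeight B Quu (S (k + 1)))
      (fun ω => p' k ω - lqGain A B Qxu Quu (S (k + 1)) *ᵥ r' k ω) :=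
    sum_nonneg fun k hk => meanQuadForm_nonneg (hS.posSemidef_inputWeight (mem_range.1 hk)) _
  have hzero : ∑ k ∈ range N, meanQuadForm μ (inputWeight B Quu (S (k + 1))) (fun ω =>
      lqGain A B Qxu Quu (S (k + 1)) *ᵥ r k ω - lqGain A B Qxu Quu (S (k + 1)) *ᵥ r k ω) = 0 :=
    sum_eq_zero fun k _ => by simp only [sub_self, ← Pi.zero_def, meanQuadForm_zero]
  rw [cost_eq_totalGainCost_add h hV hS hxuy hform, cost_eq_totalGainCost_add h hV hS hxuy' hform',
    hzero, add_zero]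
  exact (add_le_add_right hle _).trans (le_add_of_nonneg_right hrest)

end ThreePlayer

end CostSplitting

section OptimalGains

section

variable {E : Type*} [AddCommGroup E] [Module ℝ E]

/-- Finite sums of squares of real affine functions. -/
def IsSumSqAffine (f : E → ℝ) : Prop :=
  ∃ (ι : Type) (_ : Fintype ι) (a : ι → E →ᵃ[ℝ] ℝ), ∀ θ, f θ = ∑ i, a i θ ^ 2

namespace IsSumSqAffine

variable {f g : E → ℝ}

theorem add (hf : IsSumSqAffine f) (hg : IsSumSqAffine g) : IsSumSqAffine (f + g) := by
  obtain ⟨ι, _, a, ha⟩ := hf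
  obtain ⟨κ, _, b, hb⟩ := hg
  exact ⟨ι ⊕ κ, inferInstance, Sum.elim a b, fun θ => by simp [ha, hb]⟩

theorem zero : IsSumSqAffine (0 : E → ℝ) :=
  ⟨Empty, inferInstance, Empty.rec, fun θ => by simp⟩

theorem sum {σ : Type*} {s : Finset σ} {f : σ → E → ℝ} (hf : ∀ k ∈ s, IsSumSqAffine (f k)) :
    IsSumSqAffine (∑ k ∈ s, f k) :=
  sum_induction f IsSumSqAffine (fun _ _ => add) zero hf

theorem comp {D : Type*} [AddCommGroup D] [Module ℝ D] (hf : IsSumSqAffine f) (T : D →ᵃ[ℝ] E) :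
    IsSumSqAffine (f ∘ T) := by
  obtain ⟨ι, _, a, ha⟩ := hf
  exact ⟨ι, inferInstance, fun i => (a i).comp T, fun θ => ha (T θ)⟩

theorem exists_forall_le (hf : IsSumSqAffine f) (U : Submodule ℝ E) :
    ∃ θ ∈ U, ∀ θ' ∈ U, f θ ≤ f θ' := by
  obtain ⟨ι, _, a, ha⟩ := hf
  let T : E →ᵃ[ℝ] EuclideanSpace ℝ ι :=
    (WithLp.linearEquiv 2 ℝ (ι → ℝ)).symm.toLinearMap.toAffineMap.comp (AffineMap.pi a)
  have hT (θ) : f θ = dist 0 (T θ) ^ 2 := by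
    rw [ha, dist_zero_left, EuclideanSpace.norm_sq_eq]
    simp only [Real.norm_eq_abs, sq_abs]
    rfl
  have hclosed : IsClosed (U.toAffineSubspace.map T : Set (EuclideanSpace ℝ ι)) :=
    AffineSubspace.closed_of_finiteDimensional _
  obtain ⟨_, ⟨θ, hθ, rfl⟩, hmin⟩ :=
    hclosed.exists_infDist_eq_dist ⟨T 0, 0, U.zero_mem, rfl⟩ 0
  refine ⟨θ, hθ, fun θ' hθ' => ?_⟩
  have hmem : T θ' ∈ (U.toAffineSubspace.map T : Set (EuclideanSpace ℝ ι)) := ⟨θ', hθ', rfl⟩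
  rw [hT, hT]
  exact pow_le_pow_left₀ dist_nonneg (hmin ▸ Metric.infDist_le_dist_of_mem hmem) 2

end IsSumSqAffine

end

open scoped MatrixOrder Matrix.Norms.L2Operator in
theorem exists_eq_transpose_mul_self {ι : Type*} [Fintype ι] {H : Matrix ι ι ℝ}
    (hH : H.PosSemidef) : ∃ R : Matrix ι ι ℝ, H = Rᵀ * R := by
  classical
  obtain ⟨R, hR⟩ := CStarAlgebra.nonneg_iff_eq_star_mul_self.mp hH.nonneg
  exact ⟨R, hR⟩

section

variable {α : Type*} [MeasurableSpace α] {μ : Measure α} {κ ν ρ : Type} [Fintype κ] [Fintype ν]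
  [Fintype ρ] {H : Matrix κ κ ℝ}

theorem isSumSqAffine_meanQuadForm_mulVec (hH : H.PosSemidef) {Y : α → ρ → ℝ}
    (hY : MemLp Y 2 μ) :
    IsSumSqAffine fun D : Matrix κ ρ ℝ => meanQuadForm μ H fun ω => D *ᵥ Y ω := by
  obtain ⟨T, rfl⟩ := exists_eq_transpose_mul_self hH
  obtain ⟨R, hR⟩ := exists_eq_transpose_mul_self (posSemidef_crossMoment_self hY)
  have htrace (D : Matrix κ ρ ℝ) : meanQuadForm μ (Tᵀ * T) (fun ω => D *ᵥ Y ω) =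
      (T * D * Rᵀ * (T * D * Rᵀ)ᵀ).trace := by
    rw [meanQuadForm_eq_trace (memLp_mulVec hY D), crossMoment_mulVec_left hY (memLp_mulVec hY D),
      crossMoment_mulVec_right hY hY, hR, Matrix.mul_assoc Tᵀ, trace_mul_comm Tᵀ]
    simp only [transpose_mul, transpose_transpose, Matrix.mul_assoc]
  let f : Matrix κ ρ ℝ →ₗ[ℝ] Matrix κ ρ ℝ :=
    { toFun D := T * D * Rᵀ
      map_add' D D' := by rw [Matrix.mul_add, Matrix.add_mul]
      map_smul' c D := by rw [Matrix.mul_smul, Matrix.smul_mul, RingHom.id_apply] }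
  refine ⟨κ × ρ, inferInstance, fun ij => (entryLinearMap ℝ ℝ ij.1 ij.2 ∘ₗ f).toAffineMap,
    fun D => (htrace D).trans ?_⟩
  rw [Fintype.sum_prod_type]
  simp only [trace, diag_apply, mul_apply (M := T * D * Rᵀ), transpose_apply, ← sq]
  rfl

theorem isSumSqAffine_meanQuadForm_sub (hH : H.PosSemidef) {Y : α → ρ → ℝ} {Z : α → ν → ℝ}
    (hY : MemLp Y 2 μ) (hZ : MemLp Z 2 μ) (M : Matrix κ ν ℝ) :
    IsSumSqAffine fun D : Matrix κ ρ ℝ => meanQuadForm μ H fun ω => D *ᵥ Y ω - M *ᵥ Z ω := by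
  have hYZ : MemLp (fun ω => Sum.elim (Y ω) (Z ω)) 2 μ :=
    memLp_pi_iff.2 (Sum.rec hY.eval hZ.eval)
  let T : Matrix κ ρ ℝ →ₗ[ℝ] Matrix κ (ρ ⊕ ν) ℝ :=
    { toFun D := fromCols D 0
      map_add' D D' := by ext i (j | j) <;> simp
      map_smul' c D := by ext i (j | j) <;> simp }
  convert (isSumSqAffine_meanQuadForm_mulVec hH hYZ).comp
    (T.toAffineMap + AffineMap.const ℝ _ (fromCols 0 (-M))) using 2 with D
  simp [T, add_mulVec, fromCols_mulVec, neg_mulVec, sub_eq_add_neg]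

theorem isSumSqAffine_gainCost {N k : ℕ} {t : ℕ → α → ρ → ℝ} {e : ℕ → α → ν → ℝ}
    (ho : OrthogonalInnovations μ N t e) (hk : k < N) (B : Matrix ν κ ℝ) (C : Matrix ρ ν ℝ)
    (K : ℕ → Matrix ν ρ ℝ) {H : ℕ → Matrix κ κ ℝ} (hH : (H k).PosSemidef) (L : ℕ → Matrix κ ν ℝ) :
    IsSumSqAffine fun θ : (ℕ → Matrix κ ρ ℝ) × (ℕ → Matrix κ ρ ℝ) =>
      gainCost μ B K H L t e θ.1 (fun k => θ.2 k + θ.1 k * C * K (k - 1)) k := by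
  let T₁ : (ℕ → Matrix κ ρ ℝ) × (ℕ → Matrix κ ρ ℝ) →ₗ[ℝ] Matrix κ ρ ℝ :=
    LinearMap.proj k ∘ₗ LinearMap.fst ℝ _ _
  let T₂ : (ℕ → Matrix κ ρ ℝ) × (ℕ → Matrix κ ρ ℝ) →ₗ[ℝ] Matrix κ ρ ℝ :=
    { toFun θ := θ.2 k + θ.1 k * C * K (k - 1) - L k * (B * θ.1 (k - 1))
      map_add' θ θ' := by
        simp only [Prod.fst_add, Prod.snd_add, Pi.add_apply, Matrix.add_mul, Matrix.mul_add]
        abel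
      map_smul' c θ := by simp [smul_add, smul_sub] }
  have hcurrent := (isSumSqAffine_meanQuadForm_sub hH (ho.memLp_innovation k hk)
    (ho.memLp_error hk.le) (L k)).comp T₁.toAffineMap
  have hprevious := (isSumSqAffine_meanQuadForm_sub hH (ho.memLp_delay hk.le)
    (ho.memLp_delay hk.le) (L k * K (k - 1))).comp T₂.toAffineMap
  convert hcurrent.add hprevious using 2 with θ
  simp [T₁, T₂, gainCost, Matrix.mul_add, sub_mulVec, add_mulVec, sub_sub]

end

section Sparsity

variable {a b c : Fin 3 → ℕ}

/-- The matrices whose entries vanish at all positions related by `s`. -/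
def vanishingMatrices {ι κ : Type*} (s : ι → κ → Prop) : Submodule ℝ (Matrix ι κ ℝ) where
  carrier := {M | ∀ i j, s i j → M i j = 0}
  zero_mem' _ _ _ := rfl
  add_mem' hM hM' i j hij := by rw [Matrix.add_apply, hM i j hij, hM' i j hij, add_zero]
  smul_mem' c _ hM i j hij := by rw [Matrix.smul_apply, hM i j hij, smul_zero]

/-- The gains satisfying the sparsity constraints of the three-player information structure. -/
def admissibleGains (a b : Fin 3 → ℕ) :
    Submodule ℝ ((ℕ → Matrix (idx a) (idx b) ℝ) × (ℕ → Matrix (idx a) (idx b) ℝ)) :=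
  (Submodule.pi Set.univ fun _ => vanishingMatrices fun i j => i.1 ≠ j.1).prod
    (Submodule.pi Set.univ fun _ => vanishingMatrices fun i j => j.1 = i.1 + 1)

theorem mem_admissibleGains {θ : (ℕ → Matrix (idx a) (idx b) ℝ) × (ℕ → Matrix (idx a) (idx b) ℝ)} :
    θ ∈ admissibleGains a b ↔ Admissible θ.1 θ.2 := by
  simp only [admissibleGains, Submodule.mem_prod, Submodule.mem_pi, Set.mem_univ, true_imp_iff]
  rfl

theorem CyclicSparse.add {M M' : Matrix (idx a) (idx b) ℝ} (h : CyclicSparse M)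
    (h' : CyclicSparse M') : CyclicSparse (M + M') :=
  (vanishingMatrices _).add_mem h h'

theorem CyclicSparse.sub {M M' : Matrix (idx a) (idx b) ℝ} (h : CyclicSparse M)
    (h' : CyclicSparse M') : CyclicSparse (M - M') :=
  (vanishingMatrices _).sub_mem h h'

namespace BlockDiag

variable {M : Matrix (idx a) (idx b) ℝ}

theorem cyclicSparse (h : BlockDiag M) : CyclicSparse M := fun i j hij =>
  h i j <| hij ▸ (by decide : ∀ l : Fin 3, l ≠ l + 1) i.1

theorem mul_apply_eq_zero (h : BlockDiag M) {M' : Matrix (idx b) (idx c) ℝ} {i : idx a} {j : idx c}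
    (h' : ∀ l : idx b, i.1 = l.1 → M' l j = 0) : (M * M') i j = 0 := by
  rw [Matrix.mul_apply]
  refine sum_eq_zero fun l _ => ?_
  by_cases hl : i.1 = l.1
  · rw [h' l hl, mul_zero]
  · rw [h i l hl, zero_mul]

theorem mul {M' : Matrix (idx b) (idx c) ℝ} (h : BlockDiag M) (h' : BlockDiag M') :
    BlockDiag (M * M') := fun _ j hij =>
  h.mul_apply_eq_zero fun l hl => h' l j (hl ▸ hij)

theorem mul_cyclicSparse {M' : Matrix (idx b) (idx c) ℝ} (h : BlockDiag M)
    (h' : CyclicSparse M') : CyclicSparse (M * M') := fun _ j hij =>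
  h.mul_apply_eq_zero fun l hl => h' l j (hl ▸ hij)

end BlockDiag

theorem cyclicSparse_K1mat (A : Matrix (idx a) (idx a) ℝ) (C : Matrix (idx b) (idx a) ℝ)
    (V : Matrix (idx b) (idx b) ℝ) (P : Matrix (idx a) (idx a) ℝ) :
    CyclicSparse (K1mat A C V P) := fun i _ hij =>
  dif_neg (hij ▸ (by decide : ∀ l : Fin 3, l + 1 ∉ Sset l) i.1)

end Sparsity

variable {μ : Measure Ω} {N : ℕ} {A : Matrix (idx nv) (idx nv) ℝ} {B : Matrix (idx nv) (idx qv) ℝ}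
  {V : Matrix (idx pv) (idx pv) ℝ} {W P0 : Matrix (idx nv) (idx nv) ℝ} {x0 : Ω → idx nv → ℝ}
  {w : ℕ → Ω → idx nv → ℝ} {v : ℕ → Ω → idx pv → ℝ} {Qxx : Matrix (idx nv) (idx nv) ℝ}
  {Qxu : Matrix (idx nv) (idx qv) ℝ} {Quu : Matrix (idx qv) (idx qv) ℝ}
  {S : ℕ → Matrix (idx nv) (idx nv) ℝ}

theorem exists_admissible_forall_totalGainCost_le (h : IsWhiteNoise μ N P0 W V x0 w v)
    (hV : V.PosDef) (hS : IsRiccatiSolution N A B Qxx Qxu Quu S)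
    (C : Matrix (idx pv) (idx nv) ℝ) :
    ∃ F G, Admissible F G ∧ ∀ F' G', Admissible F' G' →
      totalGainCost μ N A B C V W P0 Qxu Quu S x0 w v F
          (fun k => G k + F k * C * kalmanGain A C V W P0 (k - 1)) ≤
        totalGainCost μ N A B C V W P0 Qxu Quu S x0 w v F'
          (fun k => G' k + F' k * C * kalmanGain A C V W P0 (k - 1)) := by
  have hsum := IsSumSqAffine.sum fun k hk => isSumSqAffine_gainCost (h.orthogonalInnovations hV A C)
    (mem_range.1 hk) B C (kalmanGain A C V W P0)
    (H := fun k => inputWeight B Quu (S (k + 1))) (hS.posSemidef_inputWeight (mem_range.1 hk))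
    fun k => lqGain A B Qxu Quu (S (k + 1))
  obtain ⟨θ, hθ, hmin⟩ := hsum.exists_forall_le (admissibleGains qv pv)
  refine ⟨θ.1, θ.2, mem_admissibleGains.1 hθ, fun F' G' h' => ?_⟩
  simpa only [Finset.sum_apply, totalGainCost] using hmin (F', G') (mem_admissibleGains.2 h')

end OptimalGains

section ConditionalExpectation

section

variable {α : Type*} {ν ρ : Type} [Fintype ν] [Fintype ρ] {A : Matrix ν ν ℝ} {C : Matrix ρ ν ℝ}
  {K : ℕ → Matrix ν ρ ℝ} {x0 : α → ν → ℝ} {w : ℕ → α → ν → ℝ} {v : ℕ → α → ρ → ℝ} {N : ℕ}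

theorem predError_mem_linearImages_noiseVector {k : ℕ} (hk : k ≤ N) :
    predError A C K x0 w v k ∈ linearImages (noiseVector N x0 w v) := by
  induction k with
  | zero => exact initial_mem_linearImages_noiseVector N x0 w v
  | succ k ih =>
    have he := ih (Nat.le_of_succ_le hk)
    exact sub_mem (add_mem (mulVec_mem_linearImages he A)
      (process_mem_linearImages_noiseVector hk x0 w v)) (mulVec_mem_linearImages (add_mem
        (mulVec_mem_linearImages he C) (measurement_mem_linearImages_noiseVector hk x0 w v)) (K k))

theorem innovation_mem_linearImages_noiseVector {k : ℕ} (hk : k < N) :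
    innovation A C K x0 w v k ∈ linearImages (noiseVector N x0 w v) :=
  add_mem (mulVec_mem_linearImages (predError_mem_linearImages_noiseVector hk.le) C)
    (measurement_mem_linearImages_noiseVector hk x0 w v)

end

variable {μ : Measure Ω} {N : ℕ} {A : Matrix (idx nv) (idx nv) ℝ} {B : Matrix (idx nv) (idx qv) ℝ}
  {C : Matrix (idx pv) (idx nv) ℝ} {V : Matrix (idx pv) (idx pv) ℝ}
  {W P0 : Matrix (idx nv) (idx nv) ℝ} {x0 : Ω → idx nv → ℝ} {w : ℕ → Ω → idx nv → ℝ}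
  {v : ℕ → Ω → idx pv → ℝ} {x r : ℕ → Ω → idx nv → ℝ} {u p : ℕ → Ω → idx qv → ℝ}
  {y : ℕ → Ω → idx pv → ℝ}

theorem InnovationsForm.estimate_ae_eq_condExp {F Γ : ℕ → Matrix (idx qv) (idx pv) ℝ}
    (hform : InnovationsForm B C (kalmanGain A C V W P0) F Γ u y (innov A B C V W P0 u y)
      (xpred A B C V W P0 u y) r p) (hnoise : NoiseOK μ N P0 W V x0 w v) (hV : V.PosDef)
    (hxuy : IsPlantTrajectory A B C x0 w v x u y) {k : ℕ} (hk : k ≤ N) :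
    r k =ᵐ[μ] μ[x k | pastSigma y k] := by
  set K := kalmanGain A C V W P0 with hK
  set t := innovation A C K x0 w v with ht
  have ho := hnoise.isWhiteNoise.orthogonalInnovations hV A C
  set M := B * F (k - 1) + K (k - 1) with hM
  have hsplit : x k = r k + ((fun ω => M *ᵥ delay t k ω) + predError A C K x0 w v k) := by
    funext ω
    rw [hxuy.state_eq V W P0, hform.state, hxuy.innov_eq V W P0]
    simp only [Pi.add_apply, hM, hK, ht]
    abel
  rw [hxuy.innov_eq V W P0] at hform
  have htξ : ∀ j < k, t j ∈ linearImages (noiseVector N x0 w v) :=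
    fun j hj => innovation_mem_linearImages_noiseVector (hj.trans_le hk)
  have hyt {j} (hj : j < k - 1) : y j ∈ linearPast t (k - 1) :=
    linearPast_mono t hj (output_mem_linearPast hform.output (hform.state_mem j))
  rw [hsplit]
  refine ae_eq_condExp_pastSigma_add_of_l2Orthogonal hnoise.hasGaussianLaw_noiseVector
    hnoise.measurable_noiseVector hnoise.integral_noiseVector (fun j hj => ?_)
    ((hform.linearPast_output _).ge (hform.estimate_mem k)) ?_ fun j hj => ?_
  · exact linearPast_le_linearImages (fun i hi => htξ i (hi.trans_le (k.sub_le 1))) (hyt hj)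
  · exact add_mem (mulVec_mem_linearImages (linearPast_le_linearImages htξ
      (delay_self_mem_linearPast t k)) M) (predError_mem_linearImages_noiseVector hk)
  · exact ((ho.of_mem_linearPast_delay hk (hyt hj)).symm.mulVec_left M).add_left
      (ho.of_mem_linearPast_error hk (linearPast_mono t (k.sub_le 1) (hyt hj))).symm

end ConditionalExpectation

section SparseLoops

variable {α : Type} {A : Matrix (idx nv) (idx nv) ℝ} {B : Matrix (idx nv) (idx qv) ℝ}
  {C : Matrix (idx pv) (idx nv) ℝ} {V : Matrix (idx pv) (idx pv) ℝ}
  {W P0 : Matrix (idx nv) (idx nv) ℝ} {x0 : α → idx nv → ℝ} {w : ℕ → α → idx nv → ℝ}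
  {v : ℕ → α → idx pv → ℝ} {x : ℕ → α → idx nv → ℝ} {u : ℕ → α → idx qv → ℝ}
  {y : ℕ → α → idx pv → ℝ}

theorem ClosedLoop.exists_admissible_innovationsForm {F G : ℕ → Matrix (idx qv) (idx pv) ℝ}
    {Φ : ℕ → ℕ → Matrix (idx qv) (idx pv) ℝ} (h : ClosedLoop A B C x0 w v F G Φ x u y)
    (hFG : Admissible F G) (hB : BlockDiag B) (hC : BlockDiag C)
    (V : Matrix (idx pv) (idx pv) ℝ) (W P0 : Matrix (idx nv) (idx nv) ℝ) :
    ∃ G' r p, Admissible F G' ∧ InnovationsForm B C (kalmanGain A C V W P0) F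
      (fun k => G' k + F k * C * kalmanGain A C V W P0 (k - 1)) u y
      (innov A B C V W P0 u y) (xpred A B C V W P0 u y) r p := by
  obtain ⟨hF, hG⟩ := hFG
  obtain ⟨r, p, hform⟩ := h.exists_innovationsForm V W P0
  refine ⟨fun k => G k + F k * C * (B * F (k - 1)), r, p, ⟨hF, fun k => (hG k).add
    (((hF k).mul hC).mul (hB.mul (hF _))).cyclicSparse⟩, ?_⟩
  simpa only [Matrix.mul_add, add_assoc] using hform

namespace OptLoop

variable {Fs F1s : ℕ → Matrix (idx qv) (idx pv) ℝ} {Lm : ℕ → Matrix (idx qv) (idx nv) ℝ}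

theorem exists_cyclicSparse_closedLoop (h : OptLoop A B C V W P0 x0 w v Fs F1s Lm x u y)
    (hB : BlockDiag B) (hC : BlockDiag C) (hFs : ∀ k, BlockDiag (Fs k))
    (hF1s : ∀ k, CyclicSparse (F1s k)) :
    ∃ G Φ, (∀ k, CyclicSparse (G k)) ∧ ClosedLoop A B C x0 w v Fs G Φ x u y := by
  obtain ⟨Φ, hΦ⟩ := h.exists_closedLoop
  exact ⟨_, Φ, fun k => (hF1s k).sub (((hFs k).mul hC).mul_cyclicSparse
    ((hB.mul (hFs _)).cyclicSparse.add (cyclicSparse_K1mat A C V _))), hΦ⟩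

theorem xh1_sub_ae_eq_condExp [MeasurableSpace α] {μ : Measure α} {N k : ℕ}
    (h : OptLoop A B C V W P0 x0 w v Fs F1s Lm x u y) (hnoise : NoiseOK μ N P0 W V x0 w v)
    (hV : V.PosDef) (hk : k + 1 ≤ N) :
    (fun ω => xh1 A B C V W P0 u y (k + 1) ω -
        (B * Fs k + K1mat A C V (Pmat A C V W P0 k)) *ᵥ innov A B C V W P0 u y k ω)
      =ᵐ[μ] μ[x (k + 1) | pastSigma y (k + 1)] :=
  .trans (.of_forall (xh1_succ_sub A B C V W P0 Fs u y k))
    (h.innovationsForm.estimate_ae_eq_condExp hnoise hV h.isPlantTrajectory hk)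

end OptLoop

end SparseLoops

theorem stmt0_general {nv qv pv : Fin 3 → ℕ} {Ω : Type} [MeasurableSpace Ω]
    (μ : Measure Ω) (N : ℕ)
    (A : Matrix (idx nv) (idx nv) ℝ) (B : Matrix (idx nv) (idx qv) ℝ)
    (C : Matrix (idx pv) (idx nv) ℝ)
    (hB : BlockDiag B) (hC : BlockDiag C)
    (P0 W : Matrix (idx nv) (idx nv) ℝ) (V : Matrix (idx pv) (idx pv) ℝ)
    (hV : V.PosDef)
    (x0 : Ω → idx nv → ℝ) (w : ℕ → Ω → idx nv → ℝ) (v : ℕ → Ω → idx pv → ℝ)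
    (hnoise : NoiseOK μ N P0 W V x0 w v)
    (Qxx : Matrix (idx nv) (idx nv) ℝ) (Qxu : Matrix (idx nv) (idx qv) ℝ)
    (Quu : Matrix (idx qv) (idx qv) ℝ) (Q0 : Matrix (idx nv) (idx nv) ℝ)
    (hQ : (Matrix.fromBlocks Qxx Qxu Qxuᵀ Quu).PosSemidef) (hQuu : Quu.PosDef)
    (hQ0 : Q0.PosSemidef)
    (S : ℕ → Matrix (idx nv) (idx nv) ℝ) (hSN : S N = Q0)
    (hSrec : ∀ k < N, S k = Aᵀ * S (k + 1) * A + Qxx -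
      (Aᵀ * S (k + 1) * B + Qxu) * (Quu + Bᵀ * S (k + 1) * B)⁻¹ *
        (Bᵀ * S (k + 1) * A + Qxuᵀ)) :
    ∃ Fs F1s : ℕ → Matrix (idx qv) (idx pv) ℝ,
      (∀ k, BlockDiag (Fs k)) ∧ (∀ k, CyclicSparse (F1s k)) ∧
      ∀ x u y,
        OptLoop A B C V W P0 x0 w v Fs F1s
          (fun k => -((Quu + Bᵀ * S (k + 1) * B)⁻¹ * (Bᵀ * S (k + 1) * A + Qxuᵀ)))
          x u y →
        (∃ G Φ, (∀ k, CyclicSparse (G k)) ∧ ClosedLoop A B C x0 w v Fs G Φ x u y) ∧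
        (∀ F G Φ x' u' y', Admissible F G → ClosedLoop A B C x0 w v F G Φ x' u' y' →
          cost μ Qxx Qxu Quu Q0 N x u ≤ cost μ Qxx Qxu Quu Q0 N x' u') ∧
        ((fun _ => (0 : idx nv → ℝ)) =ᵐ[μ] (μ[x 0 | pastSigma y 0])) ∧
        (∀ k, 1 ≤ k → k ≤ N →
          (fun ω => xh1 A B C V W P0 u y k ω -
            (B * Fs (k - 1) + K1mat A C V (Pmat A C V W P0 (k - 1))) *ᵥ
              innov A B C V W P0 u y (k - 1) ω)
            =ᵐ[μ] (μ[x k | pastSigma y k])) := by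
  subst hSN
  have hS : IsRiccatiSolution N A B Qxx Qxu Quu S := ⟨hQ, hQuu, hQ0, hSrec⟩
  have hwhite := hnoise.isWhiteNoise
  obtain ⟨F, G, ⟨hF, hG⟩, hmin⟩ := exists_admissible_forall_totalGainCost_le hwhite hV hS C
  have hF1 (k) : CyclicSparse (G k + F k * C * K1mat A C V (Pmat A C V W P0 (k - 1))) :=
    (hG k).add (((hF k).mul hC).mul_cyclicSparse (cyclicSparse_K1mat A C V _))
  refine ⟨F, _, hF, hF1, fun x u y hopt => ?_⟩
  have hplant := hopt.isPlantTrajectory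
  have hform := hopt.innovationsForm
  refine ⟨hopt.exists_cyclicSparse_closedLoop hB hC hF hF1, fun F' G' Φ x' u' y' hFG' hloop' => ?_,
    hform.estimate_ae_eq_condExp hnoise hV hplant N.zero_le, fun k hk1 hkN => ?_⟩
  · obtain ⟨_, r', p', hFG'', hform'⟩ :=
      hloop'.exists_admissible_innovationsForm hFG' hB hC V W P0
    refine cost_le_cost_of_totalGainCost_le hwhite hV hS hplant hform hloop'.isPlantTrajectory
      hform' ?_
    simpa only [Matrix.mul_sub, add_assoc, add_sub_cancel] using hmin F' _ hFG''
  · obtain ⟨k, rfl⟩ := Nat.exists_eq_succ_of_ne_zero (Nat.one_le_iff_ne_zero.1 hk1)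
    exact hopt.xh1_sub_ae_eq_condExp hnoise hV hkN

/-- there exist gains `F*(k)` (block diagonal) and `F¹*(k)` (with zero blocks
at `(1,2), (2,3), (3,1)`) such that the admissible control law determined recursively by
`u(k) = F*(k)(y(k) − C x̂¹(k)) + F¹*(k)(y(k−1) − C x̂(k−1|k−2)) + L(k) x̂(k)`, with
`x̂(k) = x̂¹(k) − (B F*(k−1) + K¹(k−1))(y(k−1) − C x̂(k−1|k−2))`, minimizes the cost `J`
over all admissible control laws; moreover, along this law,
`x̂(k) = E[x(k) | σ(y(0),…,y(k−2))]` almost surely for every `k`. -/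
theorem stmt0 {nv qv pv : Fin 3 → ℕ} {Ω : Type} [MeasurableSpace Ω]
    (μ : Measure Ω) [IsProbabilityMeasure μ] (N : ℕ)
    (A : Matrix (idx nv) (idx nv) ℝ) (B : Matrix (idx nv) (idx qv) ℝ)
    (C : Matrix (idx pv) (idx nv) ℝ)
    (hA : CyclicSparse A) (hB : BlockDiag B) (hC : BlockDiag C)
    (P0 W : Matrix (idx nv) (idx nv) ℝ) (V : Matrix (idx pv) (idx pv) ℝ)
    (hV : V.PosDef)
    (x0 : Ω → idx nv → ℝ) (w : ℕ → Ω → idx nv → ℝ) (v : ℕ → Ω → idx pv → ℝ)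
    (hnoise : NoiseOK μ N P0 W V x0 w v)
    (Qxx : Matrix (idx nv) (idx nv) ℝ) (Qxu : Matrix (idx nv) (idx qv) ℝ)
    (Quu : Matrix (idx qv) (idx qv) ℝ) (Q0 : Matrix (idx nv) (idx nv) ℝ)
    (hQ : (Matrix.fromBlocks Qxx Qxu Qxuᵀ Quu).PosSemidef) (hQuu : Quu.PosDef)
    (hQ0 : Q0.PosSemidef)
    (S : ℕ → Matrix (idx nv) (idx nv) ℝ) (hSN : S N = Q0)
    (hSrec : ∀ k < N, S k = Aᵀ * S (k + 1) * A + Qxx -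
      (Aᵀ * S (k + 1) * B + Qxu) * (Quu + Bᵀ * S (k + 1) * B)⁻¹ *
        (Bᵀ * S (k + 1) * A + Qxuᵀ)) :
    ∃ Fs F1s : ℕ → Matrix (idx qv) (idx pv) ℝ,
      (∀ k, BlockDiag (Fs k)) ∧ (∀ k, CyclicSparse (F1s k)) ∧
      ∀ x u y,
        OptLoop A B C V W P0 x0 w v Fs F1s
          (fun k => -((Quu + Bᵀ * S (k + 1) * B)⁻¹ * (Bᵀ * S (k + 1) * A + Qxuᵀ)))
          x u y →
        -- the recursively defined law is admissible
        (∃ G Φ, (∀ k, CyclicSparse (G k)) ∧ ClosedLoop A B C x0 w v Fs G Φ x u y) ∧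
        -- it minimizes the cost over all admissible control laws
        (∀ F G Φ x' u' y', Admissible F G → ClosedLoop A B C x0 w v F G Φ x' u' y' →
          cost μ Qxx Qxu Quu Q0 N x u ≤ cost μ Qxx Qxu Quu Q0 N x' u') ∧
        -- along this law, x̂(k) = E[x(k) | σ(y(0),…,y(k−2))] a.s. for every k
        ((fun _ => (0 : idx nv → ℝ)) =ᵐ[μ] (μ[x 0 | pastSigma y 0])) ∧
        (∀ k, 1 ≤ k → k ≤ N →
          (fun ω => xh1 A B C V W P0 u y k ω -
            (B * Fs (k - 1) + K1mat A C V (Pmat A C V W P0 (k - 1))) *ᵥ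
              innov A B C V W P0 u y (k - 1) ω)
            =ᵐ[μ] (μ[x k | pastSigma y k])) := by
  exact stmt0_general μ N A B C hB hC P0 W V hV x0 w v hnoise Qxx Qxu Quu Q0 hQ hQuu hQ0 S hSN hSrec

end
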